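/- arXiv:1812.01671 — 2 statements merged into one kernel-verified Lean document; each statement's English description precedes it below -/
import Mathlib

section
/- There exists an absolute constant C₁ such that the following holds. Let p be a prime, C ⊆ F_p\{0} and D ⊆ F_p finite nonempty sets with |C| ≤ |D|², and let L := {(c,d) : c ∈ C, d ∈ D} ⊆ Aff(F_p) be the corresponding set of affine transformations x ↦ cx + d. Then E(L) ≤ C₁·( |C|³·|D|⁴/p + |C|^(5/2)·|D|³ ). -/
/-- Composition in `Aff(F_p)` of transformations `(a,b)`, acting as `x ↦ ax + b`:
`(a,b)∘(c,d) = (ac, ad + b)`. -/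
def acomp (p : ℕ) (l m : ZMod p × ZMod p) : ZMod p × ZMod p :=
  (l.1 * m.1, l.1 * m.2 + l.2)

/-- Inverse in `Aff(F_p)` of a transformation `(a,b)` with `a ≠ 0`. -/
def ainv (p : ℕ) (l : ZMod p × ZMod p) : ZMod p × ZMod p := (l.1⁻¹, -(l.1⁻¹ * l.2))

/-- The energy of a finite set of affine transformations:
`E(L) = #{(l₁,l₂,l₁',l₂') ∈ L⁴ : l₁⁻¹∘l₂ = l₁'⁻¹∘l₂'}`. -/
noncomputable def affEnergy (p : ℕ) (L : Finset (ZMod p × ZMod p)) : ℕ :=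
  Set.ncard {q : (ZMod p × ZMod p) × (ZMod p × ZMod p) × (ZMod p × ZMod p) ×
      (ZMod p × ZMod p) |
    q.1 ∈ L ∧ q.2.1 ∈ L ∧ q.2.2.1 ∈ L ∧ q.2.2.2 ∈ L ∧
    acomp p (ainv p q.1) q.2.1 = acomp p (ainv p q.2.2.1) q.2.2.2}

/-!
Solving `l₁⁻¹ ∘ l₂ = l₁'⁻¹ ∘ l₂'` for the slope of `l₂` bounds `E(L)` by `|S|` times the number of
pairs of triples in `S × D × D` with `c₁ (d₂ - d₁) = c₂ (d₂' - d₁')`. Over `K = F(ε)` these pairs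
become incidences between two families of `N = |S| |D|²` lines of `K³` in the null directions
`(u, u², 1)` of the form `y z - x²`, and the polynomial method applies. Lines outside a surface
`Z(f)` meet few of the lines inside it, so one may assume that all lines lie on an irreducible
surface of degree less than the characteristic, and that each of them has many crossings. At a
crossing the surface has contact of order two with two null directions, so the second derivative
of `f` in the direction `u` vanishes, modulo `f`, at both roots `u` of the first one. This makes the
second null direction along a line `a` of `Z(f)` integrate to null lines in `Z(f)`; those meeting
both `a` and a further line `b` sweep out the sphere through `a` and `b`, hence `f` divides the
equation of a sphere. A sphere contains at most `2 |S| + 2 |D|` lines of the first family.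
The resulting bound `O(n^{3/2})` holds for at most `p²` lines; larger families are cut into pieces.
-/

namespace GridEnergy

open MvPolynomial
open scoped Polynomial

/-! ### Null lines -/

/-- A line of `K³` with direction `(u, u², 1)`, isotropic for the quadratic form `y z - x²`.
It is encoded by the slope `u` and by its intersection `(x₀, y₀, 0)` with the plane `z = 0`. -/
@[ext]
structure NullLine (K : Type*) where
  slope : K
  x₀ : K
  y₀ : K

lemma aeval_mem_of_filtration {σ R A : Type*} [CommSemiring R] [CommSemiring A] [Algebra R A]
    {F : ℕ → Submodule R A} (hF : Monotone F) (h_one : 1 ∈ F 0)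
    (h_mul : ∀ {d e a b}, a ∈ F d → b ∈ F e → a * b ∈ F (d + e))
    {x : σ → A} (hx : ∀ i, x i ∈ F 1) (f : MvPolynomial σ R) :
    aeval x f ∈ F f.totalDegree := by
  have h_pow (i : σ) (n : ℕ) : x i ^ n ∈ F n := by
    induction n with
    | zero => simpa using h_one
    | succ n ih => simpa only [pow_succ] using h_mul ih (hx i)
  have h_prod (m : σ →₀ ℕ) (s : Finset σ) : ∏ i ∈ s, x i ^ m i ∈ F (∑ i ∈ s, m i) := by
    classical
    induction s using Finset.induction_on with
    | empty => simpa using h_one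
    | insert i s hi ih =>
      rw [Finset.prod_insert hi, Finset.sum_insert hi]
      exact h_mul (h_pow i _) ih
  rw [aeval_def, eval₂_eq]
  refine Submodule.sum_mem _ fun m hm => ?_
  rw [← Algebra.smul_def]
  exact Submodule.smul_mem _ _ (hF (le_totalDegree hm) (h_prod m m.support))

section Restrict

variable {K : Type*} [Field K]

namespace NullLine

/-- The point of a null line at height `z = s`. -/
def point (l : NullLine K) (s : K) : Fin 3 → K :=
  ![l.x₀ + l.slope * s, l.y₀ + l.slope ^ 2 * s, s]

/-- The restriction of polynomials on `K³` to a null line, parametrized by the height `z`. -/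
noncomputable def restrict (l : NullLine K) : MvPolynomial (Fin 3) K →ₐ[K] K[X] :=
  aeval ![Polynomial.C l.x₀ + Polynomial.C l.slope * Polynomial.X,
    Polynomial.C l.y₀ + Polynomial.C (l.slope ^ 2) * Polynomial.X, Polynomial.X]

@[simp]
lemma restrict_X_zero (l : NullLine K) :
    l.restrict (X 0) = Polynomial.C l.x₀ + Polynomial.C l.slope * Polynomial.X := by
  simp [restrict]

@[simp]
lemma restrict_X_one (l : NullLine K) :
    l.restrict (X 1) = Polynomial.C l.y₀ + Polynomial.C (l.slope ^ 2) * Polynomial.X := by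
  simp [restrict]

@[simp]
lemma restrict_X_two (l : NullLine K) : l.restrict (X 2) = Polynomial.X := by
  simp [restrict]

@[simp]
lemma restrict_C (l : NullLine K) (a : K) : l.restrict (C a) = Polynomial.C a := by
  simp [restrict]

lemma eval_restrict (l : NullLine K) (s : K) (f : MvPolynomial (Fin 3) K) :
    (l.restrict f).eval s = eval (l.point s) f := by
  have h : (Polynomial.aeval s).comp l.restrict = aeval (l.point s) := by
    refine MvPolynomial.algHom_ext fun i => ?_
    fin_cases i <;> simp [point]
  simpa [Polynomial.coe_aeval_eq_eval] using DFunLike.congr_fun h f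

lemma natDegree_restrict_le (l : NullLine K) (f : MvPolynomial (Fin 3) K) :
    (l.restrict f).natDegree ≤ f.totalDegree := by
  refine (aeval_natDegree_le (n := 1) f le_rfl _ fun i => ?_).trans (mul_one _).le
  fin_cases i <;> dsimp <;> compute_degree

lemma derivative_restrict (l : NullLine K) (f : MvPolynomial (Fin 3) K) :
    Polynomial.derivative (l.restrict f) = Polynomial.C l.slope * l.restrict (pderiv 0 f) +
      Polynomial.C (l.slope ^ 2) * l.restrict (pderiv 1 f) + l.restrict (pderiv 2 f) := by
  induction f using MvPolynomial.induction_on with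
  | C a => simp
  | add p q hp hq => simp only [map_add, hp, hq]; ring
  | mul_X p i hp =>
    simp only [map_mul, Polynomial.derivative_mul, hp, Derivation.leibniz, smul_eq_mul, map_add]
    fin_cases i <;> simp [pderiv_X, Polynomial.derivative_pow] <;> ring

lemma restrict_eq_zero_of_totalDegree_lt_card {l : NullLine K} {f : MvPolynomial (Fin 3) K}
    {s : Finset K} (hs : ∀ x ∈ s, eval (l.point x) f = 0) (hf : f.totalDegree < s.card) :
    l.restrict f = 0 :=
  Polynomial.eq_zero_of_natDegree_lt_card_of_eval_eq_zero' _ s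
    (fun x hx => by rw [eval_restrict, hs x hx]) ((l.natDegree_restrict_le f).trans_lt hf)

end NullLine

end Restrict

/-! ### A Bézout bound for null lines -/

section Resultant

lemma natDegree_det_le {R n : Type*} [CommRing R] [Fintype n] [DecidableEq n]
    (M : Matrix n n R[X]) (w : n → ℕ) (h : ∀ i j, (M i j).natDegree ≤ w j) :
    M.det.natDegree ≤ ∑ j, w j := by
  rw [Matrix.det_apply]
  refine Polynomial.natDegree_sum_le_of_forall_le _ _ fun σ _ => ?_
  calc (Equiv.Perm.sign σ • ∏ j, M (σ j) j).natDegree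
    _ ≤ (∏ j, M (σ j) j).natDegree := Polynomial.natDegree_smul_le _ _
    _ ≤ ∑ j, (M (σ j) j).natDegree := Polynomial.natDegree_prod_le _ _
    _ ≤ ∑ j, w j := Finset.sum_le_sum fun j _ => h _ _

lemma natDegree_resultant_le {R : Type*} [CommRing R] (f g : R[X][X]) (m n : ℕ) {d e : ℕ}
    (hf : ∀ j, (f.coeff j).natDegree ≤ d) (hg : ∀ j, (g.coeff j).natDegree ≤ e) :
    (Polynomial.resultant f g m n).natDegree ≤ m * e + n * d := by
  rw [Polynomial.resultant]
  refine (natDegree_det_le _ (Fin.addCases (fun _ => e) fun _ => d) fun i j => ?_).trans ?_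
  · rw [Polynomial.sylvester, Matrix.of_apply]
    refine Fin.addCases (fun j => ?_) (fun j => ?_) j
    · simp only [Fin.addCases_left]
      split_ifs
      exacts [hg _, by simp]
    · simp only [Fin.addCases_right]
      split_ifs
      exacts [hf _, by simp]
  · simp [Fin.sum_univ_add]

lemma resultant_ne_zero_of_irreducible {R : Type*} [CommRing R] [IsDomain R]
    [UniqueFactorizationMonoid R] {f g : R[X]} (hf : Irreducible f) (hf_deg : f.natDegree ≠ 0)
    (hfg : ¬ f ∣ g) : Polynomial.resultant f g ≠ 0 := by
  let φ := algebraMap R (FractionRing R)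
  have hφ : Function.Injective φ := IsFractionRing.injective _ _
  let : NormalizedGCDMonoid R := Classical.choice inferInstance
  have hf_prim : f.IsPrimitive := hf.isPrimitive hf_deg
  have h_coprime : IsCoprime (f.map φ) (g.map φ) := by
    refine (hf_prim.irreducible_iff_irreducible_map_fraction_map.1 hf).coprime_iff_not_dvd.2 ?_
    exact mt hf_prim.dvd_of_fraction_map_dvd_fraction_map hfg
  intro h
  refine (Polynomial.resultant_eq_zero_iff.1 ?_).2 h_coprime
  rw [Polynomial.natDegree_map_eq_of_injective hφ, Polynomial.natDegree_map_eq_of_injective hφ,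
    Polynomial.resultant_map_map, h, map_zero]

end Resultant

section Bezout

variable {K : Type*} [Field K]

/-- The isomorphism `K[x, y, z] ≃ K[z][t][y]` with `t = x - κ y`, which makes it possible to
eliminate `y`, that is, to project from `K³` along the direction `(κ, 1, 0)`. -/
noncomputable def shearTower (κ : K) : MvPolynomial (Fin 3) K →ₐ[K] K[X][X][X] :=
  aeval (![Polynomial.C Polynomial.X + Polynomial.C (Polynomial.C (Polynomial.C κ)) * Polynomial.X,
    Polynomial.X, Polynomial.C (Polynomial.C Polynomial.X)] : Fin 3 → K[X][X][X])

lemma shearTower_bijective (κ : K) : Function.Bijective (shearTower κ) := by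
  let ψ : K[X][X][X] →+* MvPolynomial (Fin 3) K :=
    Polynomial.eval₂RingHom (Polynomial.eval₂RingHom (Polynomial.eval₂RingHom C (X 2))
      (X 0 - C κ * X 1)) (X 1)
  have h_left : ψ.comp (shearTower κ).toRingHom = RingHom.id _ := by
    refine MvPolynomial.ringHom_ext (fun a => ?_) fun i => ?_
    · simp [shearTower, ψ]
    · fin_cases i <;> simp [shearTower, ψ]
  have h_right : (shearTower κ).toRingHom.comp ψ = RingHom.id _ := by
    refine Polynomial.ringHom_ext' (Polynomial.ringHom_ext' (Polynomial.ringHom_ext' ?_ ?_) ?_) ?_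
    · ext a; simp [shearTower, ψ]
    · simp [shearTower, ψ]
    · simp [shearTower, ψ]
      ring
    · simp [shearTower, ψ]
  exact Function.bijective_iff_has_inverse.2
    ⟨ψ, fun f => DFunLike.congr_fun h_left f, fun f => DFunLike.congr_fun h_right f⟩

/-- The elements of the tower `K[z][t][y]` of degree at most `d` in `y` and in `t`. -/
noncomputable def towerDegreeLE (K : Type*) [Field K] (d : ℕ) : Submodule K K[X][X][X] where
  carrier := {a | a.natDegree ≤ d ∧ ∀ j, (a.coeff j).natDegree ≤ d}
  zero_mem' := by simp
  add_mem' ha hb := ⟨Polynomial.natDegree_add_le_of_degree_le ha.1 hb.1, fun j => by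
    rw [Polynomial.coeff_add]
    exact Polynomial.natDegree_add_le_of_degree_le (ha.2 j) (hb.2 j)⟩
  smul_mem' c _ ha := ⟨(Polynomial.natDegree_smul_le c _).trans ha.1, fun j => by
    rw [Polynomial.coeff_smul]
    exact (Polynomial.natDegree_smul_le c _).trans (ha.2 j)⟩

lemma towerDegreeLE_mono : Monotone (towerDegreeLE K) := fun _ _ hde _ ha =>
  ⟨ha.1.trans hde, fun j => (ha.2 j).trans hde⟩

lemma one_mem_towerDegreeLE : (1 : K[X][X][X]) ∈ towerDegreeLE K 0 := by
  refine ⟨by simp, fun j => ?_⟩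
  rw [Polynomial.coeff_one]
  split_ifs <;> simp

lemma mul_mem_towerDegreeLE {d e : ℕ} {a b : K[X][X][X]} (ha : a ∈ towerDegreeLE K d)
    (hb : b ∈ towerDegreeLE K e) : a * b ∈ towerDegreeLE K (d + e) := by
  refine ⟨Polynomial.natDegree_mul_le_of_le ha.1 hb.1, fun j => ?_⟩
  rw [Polynomial.coeff_mul]
  exact Polynomial.natDegree_sum_le_of_forall_le _ _ fun x _ =>
    Polynomial.natDegree_mul_le_of_le (ha.2 _) (hb.2 _)

lemma shearTower_mem_towerDegreeLE (κ : K) (f : MvPolynomial (Fin 3) K) :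
    shearTower κ f ∈ towerDegreeLE K f.totalDegree := by
  refine aeval_mem_of_filtration (A := K[X][X][X]) towerDegreeLE_mono one_mem_towerDegreeLE
    mul_mem_towerDegreeLE (fun i => ?_) f
  fin_cases i <;> refine ⟨?_, fun j => ?_⟩ <;> dsimp
  · compute_degree
  · rw [Polynomial.coeff_add, Polynomial.coeff_C_mul, Polynomial.coeff_C, Polynomial.coeff_X]
    split_ifs <;> simp
  · compute_degree
  · rw [Polynomial.coeff_X]
    split_ifs <;> simp
  · simp
  · rw [Polynomial.coeff_C]
    split_ifs <;> simp

namespace NullLine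

/-- The projection of a null line along the direction `(κ, 1, 0)`: the coordinate
`t = x - κ y` on the line, as a polynomial in `z`. -/
noncomputable def projection (κ : K) (l : NullLine K) : K[X] :=
  Polynomial.C (l.x₀ - κ * l.y₀) + Polynomial.C (l.slope - κ * l.slope ^ 2) * Polynomial.X

lemma projection_eq_iff {κ : K} {l m : NullLine K} : l.projection κ = m.projection κ ↔
    l.x₀ - κ * l.y₀ = m.x₀ - κ * m.y₀ ∧
      l.slope - κ * l.slope ^ 2 = m.slope - κ * m.slope ^ 2 := by
  refine ⟨fun h => ⟨?_, ?_⟩, fun h => by rw [projection, h.1, h.2, projection]⟩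
  · simpa [projection] using congrArg (Polynomial.coeff · 0) h
  · simpa [projection, Polynomial.coeff_C, -map_pow] using congrArg (Polynomial.coeff · 1) h

lemma eq_of_projection_eq {κ κ' : K} (hκ : κ ≠ κ') {l m : NullLine K}
    (h : l.projection κ = m.projection κ) (h' : l.projection κ' = m.projection κ') : l = m := by
  obtain ⟨h_base, h_slope⟩ := projection_eq_iff.1 h
  obtain ⟨h_base', h_slope'⟩ := projection_eq_iff.1 h'
  have hκ : κ - κ' ≠ 0 := sub_ne_zero.2 hκ
  have hy : l.y₀ = m.y₀ := mul_left_cancel₀ hκ (by linear_combination h_base' - h_base)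
  have h_sq : l.slope ^ 2 = m.slope ^ 2 :=
    mul_left_cancel₀ hκ (by linear_combination h_slope' - h_slope)
  exact NullLine.ext (by linear_combination h_slope + κ * h_sq)
    (by linear_combination h_base + κ * hy) hy

lemma exists_injOn_projection [Infinite K] (L : Finset (NullLine K)) :
    ∃ κ : K, Set.InjOn (projection κ) L := by
  let bad : Set K := ⋃ l ∈ L, ⋃ m ∈ L, {κ | l ≠ m ∧ l.projection κ = m.projection κ}
  have h_finite : bad.Finite := by
    refine L.finite_toSet.biUnion fun l _ => L.finite_toSet.biUnion fun m _ => ?_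
    refine Set.Subsingleton.finite fun κ h κ' h' => ?_
    by_contra hκ
    exact h.1 (eq_of_projection_eq hκ h.2 h'.2)
  obtain ⟨κ, hκ⟩ := h_finite.infinite_compl.nonempty
  refine ⟨κ, fun l hl m hm h => ?_⟩
  by_contra hne
  simp only [bad, Set.mem_compl_iff, Set.mem_iUnion] at hκ
  exact hκ ⟨l, hl, m, hm, hne, h⟩

/-- The restriction to a null line of polynomials written in the tower `K[z][t][y]`. -/
noncomputable def restrictTower (κ : K) (l : NullLine K) : K[X][X][X] →+* K[X] :=
  Polynomial.eval₂RingHom (Polynomial.evalRingHom (l.projection κ))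
    (Polynomial.C l.y₀ + Polynomial.C (l.slope ^ 2) * Polynomial.X)

lemma restrictTower_C (κ : K) (l : NullLine K) (h : K[X][X]) :
    l.restrictTower κ (Polynomial.C h) = h.eval (l.projection κ) := by
  simp [restrictTower]

lemma restrictTower_shearTower (κ : K) (l : NullLine K) (f : MvPolynomial (Fin 3) K) :
    l.restrictTower κ (shearTower κ f) = l.restrict f := by
  have h : (l.restrictTower κ).comp (shearTower κ).toRingHom = l.restrict.toRingHom := by
    refine MvPolynomial.ringHom_ext (fun a => ?_) fun i => ?_
    · simp [shearTower, restrictTower]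
    · fin_cases i <;> simp [shearTower, restrictTower, projection]
      ring
  exact DFunLike.congr_fun h f

lemma card_le_natDegree_of_eval_projection {κ : K} {L : Finset (NullLine K)}
    (hκ : Set.InjOn (projection κ) L) {h : K[X][X]} (h0 : h ≠ 0)
    (hL : ∀ l ∈ L, h.eval (l.projection κ) = 0) : L.card ≤ h.natDegree := by
  classical
  rw [← Finset.card_image_of_injOn hκ]
  refine Polynomial.card_le_degree_of_subset_roots fun t ht => ?_
  obtain ⟨l, hl, rfl⟩ := Finset.mem_image.1 ht
  exact (Polynomial.mem_roots h0).2 (hL l hl)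

theorem card_le_of_irreducible_of_not_dvd [Infinite K] {f g : MvPolynomial (Fin 3) K}
    (hf : Irreducible f) (hfg : ¬ f ∣ g) {L : Finset (NullLine K)}
    (hLf : ∀ l ∈ L, l.restrict f = 0) (hLg : ∀ l ∈ L, l.restrict g = 0) :
    L.card ≤ f.totalDegree * (2 * g.totalDegree + 1) := by
  obtain ⟨κ, hκ⟩ := exists_injOn_projection L
  let e := RingEquiv.ofBijective (shearTower κ) (shearTower_bijective κ)
  set F := shearTower κ f
  set G := shearTower κ g
  have hF_irr : Irreducible F := (MulEquiv.irreducible_iff e).2 hf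
  have hFG : ¬ F ∣ G := mt (map_dvd_iff e).1 hfg
  obtain ⟨hF_deg, hF_coeff⟩ := shearTower_mem_towerDegreeLE κ f
  obtain ⟨hG_deg, hG_coeff⟩ := shearTower_mem_towerDegreeLE κ g
  by_cases h_deg : F.natDegree = 0
  · have hF_C : F = Polynomial.C (F.coeff 0) := Polynomial.eq_C_of_natDegree_eq_zero h_deg
    have h0 : F.coeff 0 ≠ 0 := fun h => hF_irr.ne_zero (by rw [hF_C, h, Polynomial.C_0])
    have h_card := card_le_natDegree_of_eval_projection hκ h0 fun l hl => by
      rw [← restrictTower_C, ← hF_C, restrictTower_shearTower, hLf l hl]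
    exact (h_card.trans (hF_coeff 0)).trans (Nat.le_mul_of_pos_right _ (by lia))
  · have h_card := card_le_natDegree_of_eval_projection hκ
      (resultant_ne_zero_of_irreducible hF_irr h_deg hFG) fun l hl => by
        obtain ⟨a, b, -, -, hab⟩ :=
          Polynomial.exists_mul_add_mul_eq_C_resultant F G le_rfl le_rfl (Or.inl h_deg)
        rw [← restrictTower_C, ← hab, map_add, map_mul, map_mul, restrictTower_shearTower,
          restrictTower_shearTower, hLf l hl, hLg l hl, zero_mul, zero_mul, add_zero]
    calc L.card ≤ F.natDegree * g.totalDegree + G.natDegree * f.totalDegree :=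
          h_card.trans (natDegree_resultant_le F G _ _ hF_coeff hG_coeff)
      _ ≤ f.totalDegree * g.totalDegree + g.totalDegree * f.totalDegree := by gcongr
      _ ≤ f.totalDegree * (2 * g.totalDegree + 1) := by lia

end NullLine

end Bezout

/-! ### Polynomials vanishing on null lines -/

section VanishingPolynomial

lemma finrank_restrictDegree (σ K : Type*) [Fintype σ] [Field K] (n : ℕ) :
    Module.finrank K (restrictDegree σ K n) = (n + 1) ^ Fintype.card σ := by
  let e : {m : σ →₀ ℕ | ∀ i, m i ≤ n} ≃ (σ → Fin (n + 1)) :=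
    { toFun m i := ⟨m.1 i, Nat.lt_succ_of_le (m.2 i)⟩
      invFun v := ⟨Finsupp.equivFunOnFinite.symm fun i => v i, fun i => Fin.is_le (v i)⟩
      left_inv m := by ext; rfl
      right_inv v := rfl }
  rw [restrictDegree, Module.finrank_eq_nat_card_basis (basisRestrictSupport K _), Nat.card_congr e]
  rw [Nat.card_fun, Nat.card_eq_fintype_card, Nat.card_eq_fintype_card, Fintype.card_fin]

lemma totalDegree_le_of_mem_restrictDegree {σ K : Type*} [Fintype σ] [Field K] {n : ℕ}
    {f : MvPolynomial σ K} (hf : f ∈ restrictDegree σ K n) :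
    f.totalDegree ≤ Fintype.card σ * n := by
  refine Finset.sup_le fun m hm => ?_
  rw [Finsupp.sum_fintype _ _ (by simp)]
  simpa using Finset.sum_le_card_nsmul Finset.univ m n fun i _ =>
    (mem_restrictDegree σ f n).1 hf m hm i

variable {K : Type*} [Field K]

lemma exists_ne_zero_restrict_eq_zero (L : Finset (NullLine K)) {n : ℕ}
    (hL : L.card * (3 * n + 1) < (n + 1) ^ 3) :
    ∃ f : MvPolynomial (Fin 3) K, f ≠ 0 ∧ f.totalDegree ≤ 3 * n ∧ ∀ l ∈ L, l.restrict f = 0 := by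
  let V := restrictDegree (Fin 3) K n
  have hV : Module.finrank K V = (n + 1) ^ 3 := finrank_restrictDegree (Fin 3) K n
  have : FiniteDimensional K V := Module.finite_of_finrank_pos (by rw [hV]; positivity)
  let T : V →ₗ[K] (L × Fin (3 * n + 1) → K) := LinearMap.pi fun q =>
    (Polynomial.lcoeff K (q.2 : ℕ)).comp (q.1.1.restrict.toLinearMap.comp V.subtype)
  have hT : LinearMap.ker T ≠ ⊥ := LinearMap.ker_ne_bot_of_finrank_lt (by simpa [hV] using hL)
  obtain ⟨f, hfT, hf0⟩ := (Submodule.ne_bot_iff _).1 hT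
  have hf_deg : f.1.totalDegree ≤ 3 * n := totalDegree_le_of_mem_restrictDegree f.2
  refine ⟨f, by simpa using hf0, hf_deg, fun l hl => Polynomial.ext fun j => ?_⟩
  by_cases hj : j < 3 * n + 1
  · simpa [T] using congrFun (LinearMap.mem_ker.1 hfT) (⟨l, hl⟩, ⟨j, hj⟩)
  · exact Polynomial.coeff_eq_zero_of_natDegree_lt
      (((l.natDegree_restrict_le f).trans hf_deg).trans_lt (by lia))

open Classical in
lemma exists_irreducible_dvd_card_lt {P : MvPolynomial (Fin 3) K} (hP : P ≠ 0)
    {L : Finset (NullLine K)} {M : ℕ}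
    (h : M * P.totalDegree < (L.filter fun l => l.restrict P = 0).card) :
    ∃ f, Irreducible f ∧ f ∣ P ∧
      M * f.totalDegree < (L.filter fun l => l.restrict f = 0).card := by
  contrapose! h
  suffices key : ∀ Q, Q ≠ 0 → Q ∣ P →
      (L.filter fun l => l.restrict Q = 0).card ≤ M * Q.totalDegree from key P hP dvd_rfl
  intro Q
  induction Q using WfDvdMonoid.induction_on_irreducible with
  | zero => exact fun h0 => absurd rfl h0
  | unit u hu =>
    intro _ _
    rw [Finset.filter_false_of_mem fun l _ => (hu.map l.restrict).ne_zero]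
    simp
  | mul a i ha hi ih =>
    intro _ h_dvd
    calc (L.filter fun l => l.restrict (i * a) = 0).card
      _ = (L.filter (fun l => l.restrict i = 0) ∪ L.filter fun l => l.restrict a = 0).card := by
        simp only [map_mul, mul_eq_zero, Finset.filter_or]
      _ ≤ M * i.totalDegree + M * a.totalDegree :=
        (Finset.card_union_le _ _).trans (add_le_add (h i hi (dvd_of_mul_right_dvd h_dvd))
          (ih ha (dvd_of_mul_left_dvd h_dvd)))
      _ = M * (i * a).totalDegree := by
        rw [totalDegree_mul_of_isDomain hi.ne_zero ha, mul_add]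

end VanishingPolynomial

section Derivatives

lemma natCast_ne_zero_of_lt {R : Type*} [AddMonoidWithOne R] (p : ℕ) [CharP R p] {n : ℕ}
    (hn : n ≠ 0) (hnp : n < p) : (n : R) ≠ 0 := by
  rw [Ne, CharP.cast_eq_zero_iff R p]
  exact Nat.not_dvd_of_pos_of_lt (Nat.pos_of_ne_zero hn) hnp

lemma totalDegree_pderiv_le {σ R : Type*} [CommSemiring R] (i : σ) (f : MvPolynomial σ R) :
    (pderiv i f).totalDegree ≤ f.totalDegree - 1 := by
  refine Finset.sup_le fun m hm => Nat.le_sub_one_of_lt ?_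
  rw [mem_support_iff, coeff_pderiv] at hm
  refine lt_of_lt_of_le ?_ (le_totalDegree (mem_support_iff.2 (left_ne_zero_of_mul hm)))
  rw [Finsupp.sum_add_index' (by simp) (by simp)]
  simp

lemma totalDegree_eq_zero_of_forall_pderiv_eq_zero {σ R : Type*} [CommSemiring R]
    [NoZeroDivisors R] (p : ℕ) [CharP R p] {f : MvPolynomial σ R} (hfp : f.totalDegree < p)
    (hf : ∀ i, pderiv i f = 0) : f.totalDegree = 0 := by
  rw [totalDegree_eq_zero_iff]
  intro m hm i
  by_contra hmi
  have h_single : Finsupp.single i 1 ≤ m := by simpa using Nat.one_le_iff_ne_zero.2 hmi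
  have h_coeff := coeff_pderiv (i := i) f (m - Finsupp.single i 1)
  rw [hf i, coeff_zero, tsub_add_cancel_of_le h_single] at h_coeff
  have h_cast : ((m - Finsupp.single i 1 : σ →₀ ℕ) i : R) + 1 = (m i : R) := by
    rw [← Nat.cast_succ]
    simp [Nat.sub_add_cancel (Nat.one_le_iff_ne_zero.2 hmi)]
  have h_le : m i ≤ f.totalDegree :=
    (Finsupp.le_degree i m).trans (le_totalDegree hm)
  rw [h_cast] at h_coeff
  exact mul_ne_zero (mem_support_iff.1 hm) (natCast_ne_zero_of_lt p hmi (h_le.trans_lt hfp))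
    h_coeff.symm

variable {K : Type*} [Field K] (p : ℕ) [CharP K p]

lemma pow_succ_dvd_of_pow_dvd_derivative {φ : K[X]} (hφp : φ.natDegree < p) {s : K}
    (hs : φ.eval s = 0) {k : ℕ}
    (hk : (Polynomial.X - Polynomial.C s) ^ k ∣ Polynomial.derivative φ) :
    (Polynomial.X - Polynomial.C s) ^ (k + 1) ∣ φ := by
  rcases eq_or_ne φ 0 with rfl | hφ
  · exact dvd_zero _
  obtain ⟨ψ, hψ, hψ_dvd⟩ := Polynomial.exists_eq_pow_rootMultiplicity_mul_and_not_dvd φ hφ s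
  obtain ⟨n, hn⟩ : ∃ n, φ.rootMultiplicity s = n + 1 :=
    Nat.exists_eq_succ_of_ne_zero ((Polynomial.rootMultiplicity_pos hφ).2 hs).ne'
  rw [hn] at hψ
  have h_pow_dvd : (Polynomial.X - Polynomial.C s) ^ (n + 1) ∣ φ := Dvd.intro _ hψ.symm
  have hnp : n + 1 < p := by
    have h_le := Polynomial.natDegree_le_of_dvd h_pow_dvd hφ
    rw [Polynomial.natDegree_pow, Polynomial.natDegree_X_sub_C] at h_le
    lia
  suffices hkn : k ≤ n from (pow_dvd_pow _ (by lia)).trans h_pow_dvd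
  by_contra! hkn
  have h_derivative : Polynomial.derivative φ = (Polynomial.X - Polynomial.C s) ^ n *
      (((n + 1 : ℕ) : K[X]) * ψ + (Polynomial.X - Polynomial.C s) * Polynomial.derivative ψ) := by
    rw [hψ, Polynomial.derivative_mul, Polynomial.derivative_pow]
    simp only [Nat.cast_add, Nat.cast_one, map_add, map_natCast, map_one,
      add_tsub_cancel_right, Polynomial.derivative_sub, Polynomial.derivative_X,
      Polynomial.derivative_C, sub_zero, mul_one]
    ring
  have h_dvd := (pow_dvd_pow (Polynomial.X - Polynomial.C s) hkn).trans hk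
  rw [h_derivative, pow_succ, mul_dvd_mul_iff_left (pow_ne_zero _ (Polynomial.X_sub_C_ne_zero s)),
    dvd_add_left (dvd_mul_right _ _), Polynomial.dvd_iff_isRoot, Polynomial.IsRoot.def,
    Polynomial.eval_mul, Polynomial.eval_natCast] at h_dvd
  exact (mul_eq_zero.1 h_dvd).elim (natCast_ne_zero_of_lt p n.succ_ne_zero hnp)
    (hψ_dvd ∘ Polynomial.dvd_iff_isRoot.2)

lemma eq_zero_of_second_order_ode {φ ρ μ ν : K[X]} {s : K} (hφp : φ.natDegree < p)
    (h_ode : ρ * Polynomial.derivative (Polynomial.derivative φ) =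
      μ * Polynomial.derivative φ + ν * φ)
    (hρ : ρ.eval s ≠ 0) (hφ : φ.eval s = 0) (hφ' : (Polynomial.derivative φ).eval s = 0) :
    φ = 0 := by
  have h_coprime (k : ℕ) : IsCoprime ((Polynomial.X - Polynomial.C s) ^ k) ρ :=
    ((Polynomial.irreducible_X_sub_C s).coprime_iff_not_dvd.2
      (mt Polynomial.dvd_iff_isRoot.1 hρ)).pow_left
  have hφp' : (Polynomial.derivative φ).natDegree < p :=
    ((Polynomial.natDegree_derivative_le φ).trans (Nat.sub_le _ 1)).trans_lt hφp
  have h_dvd (k : ℕ) : (Polynomial.X - Polynomial.C s) ^ k ∣ φ ∧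
      (Polynomial.X - Polynomial.C s) ^ k ∣ Polynomial.derivative φ := by
    induction k with
    | zero => simp
    | succ k ih =>
      refine ⟨pow_succ_dvd_of_pow_dvd_derivative p hφp hφ ih.2,
        pow_succ_dvd_of_pow_dvd_derivative p hφp' hφ' ?_⟩
      refine (h_coprime k).dvd_of_dvd_mul_left ?_
      rw [h_ode]
      exact dvd_add (ih.2.mul_left _) (ih.1.mul_left _)
  by_contra h0
  have h_natDegree := Polynomial.natDegree_le_of_dvd (h_dvd (φ.natDegree + 1)).1 h0
  rw [Polynomial.natDegree_pow, Polynomial.natDegree_X_sub_C] at h_natDegree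
  lia

end Derivatives

/-! ### Second-order contact with null lines -/

section DegreeBounds

variable {σ R : Type*} [CommRing R] {f g : MvPolynomial σ R} {m n : ℕ}

lemma totalDegree_add_le_of_le (hf : f.totalDegree ≤ n) (hg : g.totalDegree ≤ n) :
    (f + g).totalDegree ≤ n :=
  (totalDegree_add _ _).trans (max_le hf hg)

lemma totalDegree_sub_le_of_le (hf : f.totalDegree ≤ n) (hg : g.totalDegree ≤ n) :
    (f - g).totalDegree ≤ n :=
  (totalDegree_sub _ _).trans (max_le hf hg)

lemma totalDegree_mul_le_of_le (hf : f.totalDegree ≤ m) (hg : g.totalDegree ≤ n) :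
    (f * g).totalDegree ≤ m + n :=
  (totalDegree_mul _ _).trans (add_le_add hf hg)

lemma totalDegree_pderiv_le_of_le (i : σ) (hf : f.totalDegree ≤ n) :
    (pderiv i f).totalDegree ≤ n :=
  (totalDegree_pderiv_le i f).trans ((Nat.sub_le _ 1).trans hf)

lemma totalDegree_pos_of_irreducible {σ K : Type*} [Field K] {f : MvPolynomial σ K}
    (hf : Irreducible f) : 0 < f.totalDegree := by
  rw [Nat.pos_iff_ne_zero, Ne, totalDegree_eq_zero_iff_eq_C]
  intro h_const
  have h_coeff : coeff 0 f ≠ 0 := fun h0 => hf.ne_zero (by rw [h_const, h0, C_0])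
  rw [h_const] at hf
  exact hf.not_isUnit ((isUnit_iff_ne_zero.2 h_coeff).map C)

lemma pderiv_eq_zero_of_dvd {σ K : Type*} [Field K] {f : MvPolynomial σ K} {i : σ}
    (hf : 0 < f.totalDegree) (h : f ∣ pderiv i f) : pderiv i f = 0 := by
  by_contra h0
  have h_le := totalDegree_le_of_dvd_of_isDomain h h0
  have h_pderiv := totalDegree_pderiv_le i f
  lia

end DegreeBounds

section MongeRemainder

variable {K : Type*} [Field K]

/-- The coefficient of `u ^ i` in the second derivative of `f` in the null direction
`(u, u ^ 2, 1)`. -/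
noncomputable def nullHessianCoeff (f : MvPolynomial (Fin 3) K) :
    Fin 5 → MvPolynomial (Fin 3) K :=
  ![pderiv 2 (pderiv 2 f),
    pderiv 0 (pderiv 2 f) + pderiv 2 (pderiv 0 f),
    pderiv 0 (pderiv 0 f) + pderiv 1 (pderiv 2 f) + pderiv 2 (pderiv 1 f),
    pderiv 0 (pderiv 1 f) + pderiv 1 (pderiv 0 f),
    pderiv 1 (pderiv 1 f)]

/-- The coefficient of `u` in the quotient of the pseudo-division of the second derivative
of `f` in the direction `(u, u ^ 2, 1)` by the first one, both viewed as polynomials in `u`.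
The multiplier is the cube of the leading coefficient `pderiv 1 f` of the first derivative. -/
noncomputable def mongeQuotient₁ (f : MvPolynomial (Fin 3) K) : MvPolynomial (Fin 3) K :=
  pderiv 1 f * (pderiv 1 f * nullHessianCoeff f 3 - pderiv 0 f * nullHessianCoeff f 4)

/-- The constant coefficient of the quotient of the pseudo-division described at
`mongeQuotient₁`. -/
noncomputable def mongeQuotient₀ (f : MvPolynomial (Fin 3) K) : MvPolynomial (Fin 3) K :=
  pderiv 1 f * (pderiv 1 f * nullHessianCoeff f 2 - pderiv 0 f * nullHessianCoeff f 3) +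
    (pderiv 0 f * pderiv 0 f - pderiv 2 f * pderiv 1 f) * nullHessianCoeff f 4

/-- The coefficient of `u` in the remainder of the pseudo-division described at
`mongeQuotient₁`. -/
noncomputable def mongeRemainder₁ (f : MvPolynomial (Fin 3) K) : MvPolynomial (Fin 3) K :=
  pderiv 1 f * (pderiv 1 f * (pderiv 1 f * nullHessianCoeff f 1)) -
    (pderiv 0 f * mongeQuotient₀ f + pderiv 2 f * mongeQuotient₁ f)

/-- The constant coefficient of the remainder of the pseudo-division described at
`mongeQuotient₁`. -/
noncomputable def mongeRemainder₀ (f : MvPolynomial (Fin 3) K) : MvPolynomial (Fin 3) K :=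
  pderiv 1 f * (pderiv 1 f * (pderiv 1 f * nullHessianCoeff f 0)) - pderiv 2 f * mongeQuotient₀ f

namespace NullLine

variable (l : NullLine K) (f : MvPolynomial (Fin 3) K)

lemma derivative_derivative_restrict :
    Polynomial.derivative (Polynomial.derivative (l.restrict f)) =
      ∑ i : Fin 5, Polynomial.C l.slope ^ (i : ℕ) * l.restrict (nullHessianCoeff f i) := by
  simp only [derivative_restrict, map_add, Polynomial.derivative_mul, Polynomial.derivative_C,
    Fin.sum_univ_five, nullHessianCoeff, Matrix.cons_val, Fin.coe_ofNat_eq_mod]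
  simp only [map_pow]
  ring

lemma restrict_pderiv_one_cube_mul_derivative_derivative_restrict :
    l.restrict (pderiv 1 f) ^ 3 * Polynomial.derivative (Polynomial.derivative (l.restrict f)) =
      (Polynomial.C l.slope ^ 2 * l.restrict (pderiv 1 f) ^ 2 * l.restrict (nullHessianCoeff f 4) +
        Polynomial.C l.slope * l.restrict (mongeQuotient₁ f) + l.restrict (mongeQuotient₀ f)) *
          Polynomial.derivative (l.restrict f) +
      (Polynomial.C l.slope * l.restrict (mongeRemainder₁ f) +
        l.restrict (mongeRemainder₀ f)) := by
  rw [derivative_derivative_restrict, derivative_restrict]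
  simp only [mongeRemainder₁, mongeRemainder₀, mongeQuotient₁, mongeQuotient₀, map_add, map_mul,
    map_sub, map_pow, Fin.sum_univ_five, Fin.coe_ofNat_eq_mod]
  ring

end NullLine

lemma totalDegree_nullHessianCoeff_le (f : MvPolynomial (Fin 3) K) (i : Fin 5) :
    (nullHessianCoeff f i).totalDegree ≤ f.totalDegree := by
  have h_second (i j : Fin 3) : (pderiv i (pderiv j f)).totalDegree ≤ f.totalDegree :=
    totalDegree_pderiv_le_of_le i (totalDegree_pderiv_le_of_le j le_rfl)
  fin_cases i
  · exact h_second _ _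
  · exact totalDegree_add_le_of_le (h_second _ _) (h_second _ _)
  · exact totalDegree_add_le_of_le (totalDegree_add_le_of_le (h_second _ _) (h_second _ _))
      (h_second _ _)
  · exact totalDegree_add_le_of_le (h_second _ _) (h_second _ _)
  · exact h_second _ _

variable (f : MvPolynomial (Fin 3) K)

lemma totalDegree_mongeQuotient₁_le :
    (mongeQuotient₁ f).totalDegree ≤ f.totalDegree + (f.totalDegree + f.totalDegree) := by
  have h_pderiv (i : Fin 3) := totalDegree_pderiv_le_of_le i (le_refl f.totalDegree)
  have h_hess := totalDegree_nullHessianCoeff_le f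
  exact totalDegree_mul_le_of_le (h_pderiv _) (totalDegree_sub_le_of_le
    (totalDegree_mul_le_of_le (h_pderiv _) (h_hess _))
    (totalDegree_mul_le_of_le (h_pderiv _) (h_hess _)))

lemma totalDegree_mongeQuotient₀_le :
    (mongeQuotient₀ f).totalDegree ≤ f.totalDegree + (f.totalDegree + f.totalDegree) := by
  have h_pderiv (i : Fin 3) := totalDegree_pderiv_le_of_le i (le_refl f.totalDegree)
  have h_hess := totalDegree_nullHessianCoeff_le f
  refine totalDegree_add_le_of_le (totalDegree_mul_le_of_le (h_pderiv _) (totalDegree_sub_le_of_le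
    (totalDegree_mul_le_of_le (h_pderiv _) (h_hess _))
    (totalDegree_mul_le_of_le (h_pderiv _) (h_hess _)))) ?_
  rw [← add_assoc]
  exact totalDegree_mul_le_of_le (totalDegree_sub_le_of_le
    (totalDegree_mul_le_of_le (h_pderiv _) (h_pderiv _))
    (totalDegree_mul_le_of_le (h_pderiv _) (h_pderiv _))) (h_hess _)

lemma totalDegree_mongeRemainder₁_le : (mongeRemainder₁ f).totalDegree ≤ 4 * f.totalDegree := by
  have h_pderiv (i : Fin 3) := totalDegree_pderiv_le_of_le i (le_refl f.totalDegree)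
  refine (totalDegree_sub_le_of_le (totalDegree_mul_le_of_le (h_pderiv 1) (totalDegree_mul_le_of_le
    (h_pderiv 1) (totalDegree_mul_le_of_le (h_pderiv 1) (totalDegree_nullHessianCoeff_le f 1))))
    (totalDegree_add_le_of_le
      (totalDegree_mul_le_of_le (h_pderiv 0) (totalDegree_mongeQuotient₀_le f))
      (totalDegree_mul_le_of_le (h_pderiv 2) (totalDegree_mongeQuotient₁_le f)))).trans ?_
  lia

lemma totalDegree_mongeRemainder₀_le : (mongeRemainder₀ f).totalDegree ≤ 4 * f.totalDegree := by
  have h_pderiv (i : Fin 3) := totalDegree_pderiv_le_of_le i (le_refl f.totalDegree)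
  refine (totalDegree_sub_le_of_le (totalDegree_mul_le_of_le (h_pderiv 1) (totalDegree_mul_le_of_le
    (h_pderiv 1) (totalDegree_mul_le_of_le (h_pderiv 1) (totalDegree_nullHessianCoeff_le f 0))))
    (totalDegree_mul_le_of_le (h_pderiv 2) (totalDegree_mongeQuotient₀_le f))).trans ?_
  lia

namespace NullLine

variable {f} {l : NullLine K}

lemma eval_tangent_eq_zero (h : l.restrict f = 0) (s : K) :
    l.slope * eval (l.point s) (pderiv 0 f) + l.slope ^ 2 * eval (l.point s) (pderiv 1 f) +
      eval (l.point s) (pderiv 2 f) = 0 := by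
  have h_deriv := congrArg (Polynomial.eval s) (l.derivative_restrict f)
  rw [h] at h_deriv
  simpa [eval_restrict] using h_deriv.symm

lemma eval_mongeRemainder_eq_zero (h : l.restrict f = 0) (s : K) :
    l.slope * eval (l.point s) (mongeRemainder₁ f) + eval (l.point s) (mongeRemainder₀ f) = 0 := by
  have h_ode := congrArg (Polynomial.eval s)
    (l.restrict_pderiv_one_cube_mul_derivative_derivative_restrict f)
  rw [h] at h_ode
  simpa [eval_restrict] using h_ode.symm

/-- If `f` divides its remainders, then `l.restrict f` solves a linear homogeneous second-order
ODE, with zero initial data at a point of tangency. -/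
lemma restrict_eq_zero_of_tangent (p : ℕ) [CharP K p] (hfp : f.totalDegree < p)
    (h₁ : f ∣ mongeRemainder₁ f) (h₀ : f ∣ mongeRemainder₀ f) {s : K}
    (h_mem : eval (l.point s) f = 0)
    (h_tangent : l.slope * eval (l.point s) (pderiv 0 f) +
      l.slope ^ 2 * eval (l.point s) (pderiv 1 f) + eval (l.point s) (pderiv 2 f) = 0)
    (h_ne : eval (l.point s) (pderiv 1 f) ≠ 0) : l.restrict f = 0 := by
  obtain ⟨g₁, hg₁⟩ := map_dvd l.restrict h₁
  obtain ⟨g₀, hg₀⟩ := map_dvd l.restrict h₀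
  have h_ode := l.restrict_pderiv_one_cube_mul_derivative_derivative_restrict f
  rw [hg₁, hg₀, show ∀ u φ : K[X], u * (φ * g₁) + φ * g₀ = (u * g₁ + g₀) * φ by
    intros; ring] at h_ode
  refine eq_zero_of_second_order_ode p (s := s) ((l.natDegree_restrict_le f).trans_lt hfp) h_ode
    ?_ ?_ ?_
  · rw [Polynomial.eval_pow, eval_restrict]
    exact pow_ne_zero _ h_ne
  · rwa [eval_restrict]
  · rw [derivative_restrict]
    simpa [eval_restrict] using h_tangent

end NullLine

end MongeRemainder

section Crossings

variable {K : Type*} [Field K] {f g : MvPolynomial (Fin 3) K} {l : NullLine K} {x u v a b : K}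

lemma eq_zero_and_eq_zero_of_affine_roots (huv : u ≠ v) (hu : u * a + b = 0) (hv : v * a + b = 0) :
    a = 0 ∧ b = 0 := by
  have ha : a = 0 := (mul_eq_zero.1 (by linear_combination hu - hv : (u - v) * a = 0)).resolve_left
    (sub_ne_zero.2 huv)
  exact ⟨ha, by simpa [ha] using hu⟩

namespace NullLine

/-- The point of `l` at height `x` also lies on a null line of a different slope contained in
the zero set of `f`. -/
def IsCrossing (f : MvPolynomial (Fin 3) K) (l : NullLine K) (x : K) : Prop :=
  ∃ l' : NullLine K, l'.restrict f = 0 ∧ l'.point x = l.point x ∧ l'.slope ≠ l.slope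

/-- A null line in the zero set of `f` with more crossings than the degree of the
`mongeRemainder`s of `f`. -/
def IsRich (f : MvPolynomial (Fin 3) K) (l : NullLine K) : Prop :=
  l.restrict f = 0 ∧ ∃ s : Finset K, 4 * f.totalDegree < s.card ∧ ∀ x ∈ s, IsCrossing f l x

lemma IsCrossing.eval_mongeRemainder_eq_zero (h : IsCrossing f l x) (hl : l.restrict f = 0) :
    eval (l.point x) (mongeRemainder₁ f) = 0 ∧ eval (l.point x) (mongeRemainder₀ f) = 0 := by
  obtain ⟨l', hl', h_point, h_slope⟩ := h
  exact eq_zero_and_eq_zero_of_affine_roots h_slope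
    (h_point ▸ NullLine.eval_mongeRemainder_eq_zero hl' x)
    (NullLine.eval_mongeRemainder_eq_zero hl x)

lemma IsCrossing.eval_pderiv_eq_zero (h : IsCrossing f l x) (hl : l.restrict f = 0)
    (h_one : eval (l.point x) (pderiv 1 f) = 0) (i : Fin 3) :
    eval (l.point x) (pderiv i f) = 0 := by
  obtain ⟨l', hl', h_point, h_slope⟩ := h
  have h_tangent := eval_tangent_eq_zero hl x
  have h_tangent' := eval_tangent_eq_zero hl' x
  rw [h_point] at h_tangent'
  obtain ⟨h_zero, h_two⟩ : eval (l.point x) (pderiv 0 f) = 0 ∧ eval (l.point x) (pderiv 2 f) = 0 :=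
    eq_zero_and_eq_zero_of_affine_roots h_slope
      (by linear_combination h_tangent' - l'.slope ^ 2 * h_one)
      (by linear_combination h_tangent - l.slope ^ 2 * h_one)
  fin_cases i
  exacts [h_zero, h_one, h_two]

lemma IsCrossing.eval_pderiv_zero_add_ne_zero (h : IsCrossing f l x) (hl : l.restrict f = 0)
    (h_one : eval (l.point x) (pderiv 1 f) ≠ 0) :
    eval (l.point x) (pderiv 0 f) + 2 * l.slope * eval (l.point x) (pderiv 1 f) ≠ 0 := by
  obtain ⟨l', hl', h_point, h_slope⟩ := h
  have h_tangent := eval_tangent_eq_zero hl x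
  have h_tangent' := eval_tangent_eq_zero hl' x
  rw [h_point] at h_tangent'
  intro h_double
  have h_sq : (l'.slope - l.slope) ^ 2 * eval (l.point x) (pderiv 1 f) = 0 := by
    linear_combination h_tangent' - h_tangent - (l'.slope - l.slope) * h_double
  exact mul_ne_zero (pow_ne_zero 2 (sub_ne_zero.2 h_slope)) h_one h_sq

lemma IsRich.restrict_eq_zero (h : IsRich f l) (hg : g.totalDegree ≤ 4 * f.totalDegree)
    (hfg : ∀ x, IsCrossing f l x → eval (l.point x) g = 0) : l.restrict g = 0 := by
  obtain ⟨-, s, hs, h_cross⟩ := h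
  exact restrict_eq_zero_of_totalDegree_lt_card (fun x hx => hfg x (h_cross x hx)) (hg.trans_lt hs)

variable {R : Finset (NullLine K)}

lemma dvd_of_forall_isRich [Infinite K] (hf : Irreducible f) (hR : ∀ l ∈ R, IsRich f l)
    (hcard : 12 * f.totalDegree ^ 2 < R.card) (hg : g.totalDegree ≤ 4 * f.totalDegree)
    (hRg : ∀ l ∈ R, l.restrict g = 0) : f ∣ g := by
  by_contra hfg
  have h_bezout := card_le_of_irreducible_of_not_dvd hf hfg (fun l hl => (hR l hl).1) hRg
  have hf_pos := totalDegree_pos_of_irreducible hf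
  nlinarith

lemma dvd_mongeRemainder [Infinite K] (hf : Irreducible f) (hR : ∀ l ∈ R, IsRich f l)
    (hcard : 12 * f.totalDegree ^ 2 < R.card) : f ∣ mongeRemainder₁ f ∧ f ∣ mongeRemainder₀ f :=
  ⟨dvd_of_forall_isRich hf hR hcard (totalDegree_mongeRemainder₁_le f) fun l hl =>
      (hR l hl).restrict_eq_zero (totalDegree_mongeRemainder₁_le f) fun _ hx =>
        (hx.eval_mongeRemainder_eq_zero (hR l hl).1).1,
    dvd_of_forall_isRich hf hR hcard (totalDegree_mongeRemainder₀_le f) fun l hl =>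
      (hR l hl).restrict_eq_zero (totalDegree_mongeRemainder₀_le f) fun _ hx =>
        (hx.eval_mongeRemainder_eq_zero (hR l hl).1).2⟩

lemma exists_restrict_pderiv_one_ne_zero [Infinite K] (p : ℕ) [CharP K p] (hf : Irreducible f)
    (hfp : f.totalDegree < p) (hR : ∀ l ∈ R, IsRich f l)
    (hcard : 12 * f.totalDegree ^ 2 < R.card) : ∃ l ∈ R, l.restrict (pderiv 1 f) ≠ 0 := by
  by_contra! h_one
  have hf_pos := totalDegree_pos_of_irreducible hf
  have h_deg (i : Fin 3) : (pderiv i f).totalDegree ≤ 4 * f.totalDegree :=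
    (totalDegree_pderiv_le_of_le i le_rfl).trans (by lia)
  have h_pderiv (i : Fin 3) : pderiv i f = 0 := by
    refine pderiv_eq_zero_of_dvd hf_pos (dvd_of_forall_isRich hf hR hcard (h_deg i) fun l hl =>
      (hR l hl).restrict_eq_zero (h_deg i) fun x hx => hx.eval_pderiv_eq_zero (hR l hl).1 ?_ i)
    rw [← eval_restrict, h_one l hl, Polynomial.eval_zero]
  exact hf_pos.ne' (totalDegree_eq_zero_of_forall_pderiv_eq_zero p hfp h_pderiv)

end NullLine

end Crossings

/-! ### Spheres -/

section Sphere

variable {K : Type*} [Field K]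

/-- The spheres (and planes) of the quadratic form `y z - x²`, up to a scalar. -/
noncomputable def sphere (v : Fin 5 → K) : MvPolynomial (Fin 3) K :=
  C (v 0) * (X 1 * X 2 - X 0 ^ 2) + C (v 1) * X 0 + C (v 2) * X 1 + C (v 3) * X 2 + C (v 4)

lemma eval_sphere (v : Fin 5 → K) (x : Fin 3 → K) : eval x (sphere v) =
    v 0 * (x 1 * x 2 - x 0 ^ 2) + v 1 * x 0 + v 2 * x 1 + v 3 * x 2 + v 4 := by
  simp [sphere]

lemma totalDegree_sphere_le (v : Fin 5 → K) : (sphere v).totalDegree ≤ 2 := by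
  have h_monomial (a : K) (i : Fin 3) : (C a * X i).totalDegree ≤ 2 :=
    (totalDegree_mul_le_of_le (totalDegree_C a).le (totalDegree_X i).le).trans (by norm_num)
  have h_form : (X 1 * X 2 - X 0 ^ 2 : MvPolynomial (Fin 3) K).totalDegree ≤ 2 :=
    totalDegree_sub_le_of_le (totalDegree_mul_le_of_le (totalDegree_X 1).le (totalDegree_X 2).le)
      (totalDegree_X_pow 0 2).le
  refine totalDegree_add_le_of_le (totalDegree_add_le_of_le (totalDegree_add_le_of_le
    (totalDegree_add_le_of_le ?_ (h_monomial _ _)) (h_monomial _ _)) (h_monomial _ _)) (by simp)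
  simpa using totalDegree_mul_le_of_le (totalDegree_C (v 0)).le h_form

lemma C_mul_X_add_C_eq_zero_iff {R : Type*} [Semiring R] {a b : R} :
    Polynomial.C a * Polynomial.X + Polynomial.C b = 0 ↔ a = 0 ∧ b = 0 := by
  refine ⟨fun h => ⟨?_, ?_⟩, fun ⟨ha, hb⟩ => by simp [ha, hb]⟩
  · simpa using congrArg (Polynomial.coeff · 1) h
  · simpa using congrArg (Polynomial.coeff · 0) h

lemma infinite_setOf_eval_ne_zero [Infinite K] {q : K[X]} (hq : q ≠ 0) :
    {s | q.eval s ≠ 0}.Infinite :=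
  (Polynomial.finite_setOfPred_isRoot hq).infinite_compl

namespace NullLine

@[simp]
lemma point_zero (l : NullLine K) (s : K) : l.point s 0 = l.x₀ + l.slope * s := rfl

@[simp]
lemma point_one (l : NullLine K) (s : K) : l.point s 1 = l.y₀ + l.slope ^ 2 * s := rfl

@[simp]
lemma point_two (l : NullLine K) (s : K) : l.point s 2 = s := rfl

lemma point_eq_iff {l l' : NullLine K} {s : K} : l.point s = l'.point s ↔
    l.x₀ + l.slope * s = l'.x₀ + l'.slope * s ∧
      l.y₀ + l.slope ^ 2 * s = l'.y₀ + l'.slope ^ 2 * s := by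
  simp [funext_iff, Fin.forall_fin_succ, point]

lemma eq_of_point_eq_of_point_eq {l l' : NullLine K} {s t : K} (hst : s ≠ t)
    (hs : l.point s = l'.point s) (ht : l.point t = l'.point t) : l = l' := by
  obtain ⟨hs_x, hs_y⟩ := point_eq_iff.1 hs
  obtain ⟨ht_x, -⟩ := point_eq_iff.1 ht
  have h_slope : l.slope = l'.slope :=
    mul_right_cancel₀ (sub_ne_zero.2 hst) (by linear_combination hs_x - ht_x)
  rw [h_slope] at hs_x hs_y
  exact NullLine.ext h_slope (by linear_combination hs_x) (by linear_combination hs_y)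

lemma restrict_sphere (v : Fin 5 → K) (l : NullLine K) : l.restrict (sphere v) =
    Polynomial.C (v 0 * (l.y₀ - 2 * l.slope * l.x₀) + v 1 * l.slope + v 2 * l.slope ^ 2 + v 3) *
        Polynomial.X +
      Polynomial.C (-v 0 * l.x₀ ^ 2 + v 1 * l.x₀ + v 2 * l.y₀ + v 4) := by
  simp only [sphere, map_add, map_mul, map_sub, map_pow, restrict_X_zero, restrict_X_one,
    restrict_X_two, restrict_C, map_neg, map_ofNat]
  ring

lemma restrict_sphere_eq_zero_iff {v : Fin 5 → K} {l : NullLine K} : l.restrict (sphere v) = 0 ↔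
    v 0 * (l.y₀ - 2 * l.slope * l.x₀) + v 1 * l.slope + v 2 * l.slope ^ 2 + v 3 = 0 ∧
      -v 0 * l.x₀ ^ 2 + v 1 * l.x₀ + v 2 * l.y₀ + v 4 = 0 := by
  rw [restrict_sphere, C_mul_X_add_C_eq_zero_iff]

lemma restrict_sphere_eq_zero_of_two_points {v : Fin 5 → K} {l : NullLine K} {s t : K}
    (hst : s ≠ t) (hs : eval (l.point s) (sphere v) = 0) (ht : eval (l.point t) (sphere v) = 0) :
    l.restrict (sphere v) = 0 := by
  rw [← eval_restrict, restrict_sphere] at hs ht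
  simp only [Polynomial.eval_add, Polynomial.eval_mul, Polynomial.eval_C, Polynomial.eval_X]
    at hs ht
  exact restrict_sphere_eq_zero_iff.2 (eq_zero_and_eq_zero_of_affine_roots hst
    (by linear_combination hs) (by linear_combination ht))

lemma exists_sphere_restrict_eq_zero (a b : NullLine K) :
    ∃ v : Fin 5 → K, v ≠ 0 ∧ a.restrict (sphere v) = 0 ∧ b.restrict (sphere v) = 0 := by
  let M : Matrix (Fin 4) (Fin 5) K := !![
    a.y₀ - 2 * a.slope * a.x₀, a.slope, a.slope ^ 2, 1, 0;
    -a.x₀ ^ 2, a.x₀, a.y₀, 0, 1;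
    b.y₀ - 2 * b.slope * b.x₀, b.slope, b.slope ^ 2, 1, 0;
    -b.x₀ ^ 2, b.x₀, b.y₀, 0, 1]
  have hM : LinearMap.ker M.mulVecLin ≠ ⊥ := LinearMap.ker_ne_bot_of_finrank_lt (by simp)
  obtain ⟨v, hv, hv0⟩ := (Submodule.ne_bot_iff _).1 hM
  have h_row (i : Fin 4) : ∑ j, M i j * v j = 0 := congrFun (LinearMap.mem_ker.1 hv) i
  have ha₁ := h_row 0
  have ha₀ := h_row 1
  have hb₁ := h_row 2
  have hb₀ := h_row 3
  simp only [M, Fin.sum_univ_five, Matrix.of_apply, Matrix.cons_val] at ha₁ ha₀ hb₁ hb₀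
  refine ⟨v, hv0, restrict_sphere_eq_zero_iff.2 ⟨?_, ?_⟩, restrict_sphere_eq_zero_iff.2 ⟨?_, ?_⟩⟩
  · linear_combination ha₁
  · linear_combination ha₀
  · linear_combination hb₁
  · linear_combination hb₀

lemma dvd_of_infinite_restrict_eq_zero [Infinite K] {f g : MvPolynomial (Fin 3) K}
    (hf : Irreducible f) {T : Set (NullLine K)} (hT : T.Infinite)
    (h : ∀ l ∈ T, l.restrict f = 0 ∧ l.restrict g = 0) : f ∣ g := by
  by_contra hfg
  obtain ⟨t, htT, ht⟩ := hT.exists_subset_card_eq (f.totalDegree * (2 * g.totalDegree + 1) + 1)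
  have h_bezout := card_le_of_irreducible_of_not_dvd hf hfg (fun l hl => (h l (htT hl)).1)
    fun l hl => (h l (htT hl)).2
  lia

end NullLine

end Sphere

/-! ### Transversals of a null line -/

section Transversal

variable {K : Type*} [Field K]

namespace NullLine

/-- The difference of the `x`-coordinates of a point and of the point of `a` of the same height,
written as a `sphere`. -/
noncomputable def offsetX (a : NullLine K) : MvPolynomial (Fin 3) K :=
  sphere ![0, 1, 0, -a.slope, -a.x₀]

/-- The difference of the `y`-coordinates of a point and of the point of `a` of the same height,
corrected by `-2 * a.slope * a.offsetX` and written as a `sphere`. The correction makes the pair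
`(offsetX, offsetY)` proportional to `(r, r ^ 2)` on a null line of slope `a.slope + r` that
meets `a`. -/
noncomputable def offsetY (a : NullLine K) : MvPolynomial (Fin 3) K :=
  sphere ![0, -2 * a.slope, 1, a.slope ^ 2, 2 * a.slope * a.x₀ - a.y₀]

/-- The polynomial whose quotient by `offsetY` is the height of the point of `a` lying on a common
null line with a given point. -/
noncomputable def footNumerator (a : NullLine K) : MvPolynomial (Fin 3) K :=
  X 2 * a.offsetY - a.offsetX ^ 2

/-- The height of the point of `a` lying on a common null line with `x`. It has no meaning where
`offsetY` vanishes. -/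
noncomputable def foot (a : NullLine K) (x : Fin 3 → K) : K :=
  x 2 - eval x a.offsetX ^ 2 / eval x a.offsetY

/-- The homogenization of degree `m` of `q`, evaluated at `footNumerator` and `offsetY`. -/
noncomputable def footHomogenization (a : NullLine K) (m : ℕ) (q : K[X]) :
    MvPolynomial (Fin 3) K :=
  ∑ i ∈ Finset.range (m + 1), C (q.coeff i) * a.footNumerator ^ i * a.offsetY ^ (m - i)

/-- The null line of slope `a.slope + r` through `a.point s`. -/
def transversal (a : NullLine K) (s r : K) : NullLine K :=
  ⟨a.slope + r, a.x₀ - r * s, a.y₀ - (2 * a.slope * r + r ^ 2) * s⟩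

variable (a : NullLine K) {b : NullLine K} {x : Fin 3 → K}

lemma eval_offsetX (x : Fin 3 → K) : eval x a.offsetX = x 0 - a.x₀ - a.slope * x 2 := by
  simp only [offsetX, eval_sphere, Matrix.cons_val]
  ring

lemma eval_offsetY (x : Fin 3 → K) : eval x a.offsetY =
    x 1 - a.y₀ - a.slope ^ 2 * x 2 - 2 * a.slope * (x 0 - a.x₀ - a.slope * x 2) := by
  simp only [offsetY, eval_sphere, Matrix.cons_val]
  ring

lemma eval_footNumerator (x : Fin 3 → K) :
    eval x a.footNumerator = x 2 * eval x a.offsetY - eval x a.offsetX ^ 2 := by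
  simp [footNumerator]

lemma eval_footNumerator_eq_foot_mul (hx : eval x a.offsetY ≠ 0) :
    eval x a.footNumerator = a.foot x * eval x a.offsetY := by
  rw [eval_footNumerator, foot]
  field_simp

lemma eval_footHomogenization {m : ℕ} {q : K[X]} (hq : q.natDegree ≤ m) {s : K}
    (h : eval x a.footNumerator = s * eval x a.offsetY) :
    eval x (a.footHomogenization m q) = eval x a.offsetY ^ m * q.eval s := by
  rw [footHomogenization, Polynomial.eval_eq_sum_range' (Nat.lt_succ_of_le hq), map_sum,
    Finset.mul_sum]
  refine Finset.sum_congr rfl fun i hi => ?_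
  obtain ⟨j, rfl⟩ := Nat.exists_eq_add_of_le (Nat.lt_succ_iff.1 (Finset.mem_range.1 hi))
  simp only [map_mul, map_pow, eval_C, h, Nat.add_sub_cancel_left]
  ring

variable {a}

lemma eq_of_offset_eq {y : Fin 3 → K} (h_height : x 2 = y 2)
    (hX : eval x a.offsetX = eval y a.offsetX) (hY : eval x a.offsetY = eval y a.offsetY) :
    x = y := by
  rw [eval_offsetX, eval_offsetX, h_height] at hX
  rw [eval_offsetY, eval_offsetY, h_height] at hY
  have h_zero : x 0 = y 0 := by linear_combination hX
  have h_one : x 1 = y 1 := by linear_combination hY + 2 * a.slope * h_zero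
  funext i
  fin_cases i
  exacts [h_zero, h_one, h_height]

lemma point_eq_of_restrict_footNumerator_eq {s : K}
    (h : b.restrict a.footNumerator = Polynomial.C s * b.restrict a.offsetY) :
    b.point s = a.point s := by
  have h_affine : b.restrict (a.footNumerator - C s * a.offsetY) =
      Polynomial.C (b.y₀ - a.y₀ - 2 * a.slope * (b.x₀ - a.x₀) -
        2 * (b.x₀ - a.x₀) * (b.slope - a.slope) - s * (b.slope - a.slope) ^ 2) * Polynomial.X +
      Polynomial.C (-(b.x₀ - a.x₀) ^ 2 - s * (b.y₀ - a.y₀ - 2 * a.slope * (b.x₀ - a.x₀))) := by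
    simp only [footNumerator, offsetX, offsetY, map_sub, map_mul, map_pow, map_neg, map_zero,
      map_one, map_add, map_ofNat, restrict_sphere, restrict_C, restrict_X_two, Matrix.cons_val]
    ring
  rw [map_sub, map_mul, restrict_C, h, sub_self, eq_comm, C_mul_X_add_C_eq_zero_iff] at h_affine
  obtain ⟨h₁, h₀⟩ := h_affine
  have h_x : b.x₀ - a.x₀ + s * (b.slope - a.slope) = 0 :=
    pow_eq_zero_iff two_ne_zero |>.1 (by linear_combination -h₀ - s * h₁)
  exact point_eq_iff.2 ⟨by linear_combination h_x, by linear_combination h₁ + 2 * b.slope * h_x⟩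

variable (a)

@[simp]
lemma transversal_point_self (s r : K) : (a.transversal s r).point s = a.point s :=
  point_eq_iff.2 ⟨by rw [transversal]; ring, by rw [transversal]; ring⟩

lemma eval_transversal_offsetX (s r z : K) :
    eval ((a.transversal s r).point z) a.offsetX = r * (z - s) := by
  simp only [eval_offsetX, transversal, point_zero, point_two]
  ring

lemma eval_transversal_offsetY (s r z : K) :
    eval ((a.transversal s r).point z) a.offsetY = r ^ 2 * (z - s) := by
  simp only [eval_offsetY, transversal, point_zero, point_one, point_two]
  ring

variable {a}

lemma eq_of_transversal_eq {s t r r' : K} (hr : r ≠ 0)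
    (h : a.transversal s r = a.transversal t r') : s = t := by
  obtain ⟨h_slope, h_x, -⟩ := NullLine.mk.inj h
  obtain rfl := add_left_cancel h_slope
  exact mul_left_cancel₀ hr (sub_right_injective h_x)

lemma foot_ne_height (hX : eval x a.offsetX ≠ 0) (hY : eval x a.offsetY ≠ 0) : a.foot x ≠ x 2 :=
  fun h => div_ne_zero (pow_ne_zero 2 hX) hY (sub_eq_self.1 h)

lemma transversal_foot_point (hX : eval x a.offsetX ≠ 0) (hY : eval x a.offsetY ≠ 0) :
    (a.transversal (a.foot x) (eval x a.offsetY / eval x a.offsetX)).point (x 2) = x := by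
  refine eq_of_offset_eq (a := a) (point_two _ _) ?_ ?_
  · rw [eval_transversal_offsetX, foot]
    field_simp
    ring
  · rw [eval_transversal_offsetY, foot]
    field_simp
    ring

end NullLine

end Transversal

/-! ### The surface swept by the transversals of a line -/

section Sweep

variable {K : Type*} [Field K]

namespace NullLine

/-- The numerator of `relativeSlope`. -/
noncomputable def slopeNumerator (f : MvPolynomial (Fin 3) K) (a : NullLine K) : K[X] :=
  -(a.restrict (pderiv 0 f) + Polynomial.C (2 * a.slope) * a.restrict (pderiv 1 f))

/-- For a null line `a` in the zero set of `f`, the slope, relative to `a`, of the second null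
direction tangent to the zero set of `f` at `a.point s`. It is the difference of the roots of the
quadratic polynomial `u ^ 2 * pderiv 1 f + u * pderiv 0 f + pderiv 2 f`, which has the root
`a.slope`. -/
noncomputable def relativeSlope (f : MvPolynomial (Fin 3) K) (a : NullLine K) (s : K) : K :=
  (slopeNumerator f a).eval s / (a.restrict (pderiv 1 f)).eval s

/-- The equation of the surface swept by the transversals of `a` of slope `relativeSlope f a`. -/
noncomputable def sweep (f : MvPolynomial (Fin 3) K) (a : NullLine K) : MvPolynomial (Fin 3) K :=
  a.offsetY * a.footHomogenization f.totalDegree (a.restrict (pderiv 1 f)) -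
    a.offsetX * a.footHomogenization f.totalDegree (slopeNumerator f a)

variable {f : MvPolynomial (Fin 3) K} {a b : NullLine K} {x : Fin 3 → K} {s : K}

lemma natDegree_restrict_pderiv_le (i : Fin 3) :
    (a.restrict (pderiv i f)).natDegree ≤ f.totalDegree :=
  (natDegree_restrict_le _ _).trans (totalDegree_pderiv_le_of_le i le_rfl)

lemma natDegree_slopeNumerator_le : (slopeNumerator f a).natDegree ≤ f.totalDegree := by
  rw [slopeNumerator, Polynomial.natDegree_neg]
  exact Polynomial.natDegree_add_le_of_degree_le (natDegree_restrict_pderiv_le 0)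
    ((Polynomial.natDegree_C_mul_le _ _).trans (natDegree_restrict_pderiv_le 1))

lemma eval_sweep (h : eval x a.footNumerator = s * eval x a.offsetY) :
    eval x (sweep f a) = eval x a.offsetY ^ f.totalDegree *
      (eval x a.offsetY * (a.restrict (pderiv 1 f)).eval s -
        eval x a.offsetX * (slopeNumerator f a).eval s) := by
  rw [sweep, map_sub, map_mul, map_mul,
    a.eval_footHomogenization (natDegree_restrict_pderiv_le 1) h,
    a.eval_footHomogenization natDegree_slopeNumerator_le h]
  ring

lemma restrict_transversal_relativeSlope_eq_zero (p : ℕ) [CharP K p] (hfp : f.totalDegree < p)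
    (h₁ : f ∣ mongeRemainder₁ f) (h₀ : f ∣ mongeRemainder₀ f) (ha : a.restrict f = 0)
    (hs : (a.restrict (pderiv 1 f)).eval s ≠ 0) :
    (a.transversal s (relativeSlope f a s)).restrict f = 0 := by
  have h_tangent := eval_tangent_eq_zero ha s
  have h_slope : relativeSlope f a s * eval (a.point s) (pderiv 1 f) =
      -(eval (a.point s) (pderiv 0 f) + 2 * a.slope * eval (a.point s) (pderiv 1 f)) := by
    rw [← eval_restrict a s (pderiv 1 f), relativeSlope, div_mul_cancel₀ _ hs]
    simp [slopeNumerator, eval_restrict]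
  refine restrict_eq_zero_of_tangent (s := s) p hfp h₁ h₀ ?_ ?_ ?_ <;>
    rw [transversal_point_self]
  · rw [← eval_restrict, ha, Polynomial.eval_zero]
  · rw [transversal]
    linear_combination h_tangent + relativeSlope f a s * h_slope
  · rwa [← eval_restrict]

lemma IsRich.slopeNumerator_ne_zero (ha : IsRich f a) (h_one : a.restrict (pderiv 1 f) ≠ 0) :
    slopeNumerator f a ≠ 0 := by
  intro h
  refine h_one (ha.restrict_eq_zero ((totalDegree_pderiv_le_of_le 1 le_rfl).trans (by lia))
    fun x hx => ?_)
  by_contra hx_one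
  refine hx.eval_pderiv_zero_add_ne_zero ha.1 hx_one ?_
  have h_eval := congrArg (Polynomial.eval x) (neg_eq_zero.1 h)
  simpa [eval_restrict] using h_eval

lemma restrict_transversal_sweep_eq_zero [Infinite K]
    (hs : (a.restrict (pderiv 1 f)).eval s ≠ 0) :
    (a.transversal s (relativeSlope f a s)).restrict (sweep f a) = 0 := by
  refine Polynomial.funext fun z => ?_
  have h_foot : eval ((a.transversal s (relativeSlope f a s)).point z) a.footNumerator =
      s * eval ((a.transversal s (relativeSlope f a s)).point z) a.offsetY := by
    rw [eval_footNumerator, eval_transversal_offsetX, eval_transversal_offsetY, point_two]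
    ring
  have h_slope := div_mul_cancel₀ ((slopeNumerator f a).eval s) hs
  rw [eval_restrict, eval_sweep h_foot, eval_transversal_offsetX, eval_transversal_offsetY,
    Polynomial.eval_zero, ← h_slope, ← relativeSlope]
  ring

lemma dvd_sweep [Infinite K] (hf : Irreducible f) (h_num : slopeNumerator f a ≠ 0)
    (h_one : a.restrict (pderiv 1 f) ≠ 0)
    (h_transversal : ∀ s, (a.restrict (pderiv 1 f)).eval s ≠ 0 →
      (a.transversal s (relativeSlope f a s)).restrict f = 0) : f ∣ sweep f a := by
  have h_inj : Set.InjOn (fun s => a.transversal s (relativeSlope f a s))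
      {s | (slopeNumerator f a * a.restrict (pderiv 1 f)).eval s ≠ 0} := by
    intro s hs t _ hst
    rw [Set.mem_ofPred_eq, Polynomial.eval_mul] at hs
    exact eq_of_transversal_eq (div_ne_zero (left_ne_zero_of_mul hs) (right_ne_zero_of_mul hs)) hst
  refine dvd_of_infinite_restrict_eq_zero hf
    ((infinite_setOf_eval_ne_zero (mul_ne_zero h_num h_one)).image h_inj) ?_
  rintro _ ⟨s, hs, rfl⟩
  rw [Set.mem_ofPred_eq, Polynomial.eval_mul] at hs
  have hs_one := right_ne_zero_of_mul hs
  exact ⟨h_transversal s hs_one, restrict_transversal_sweep_eq_zero hs_one⟩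

lemma relativeSlope_foot_eq (hX : eval x a.offsetX ≠ 0) (hY : eval x a.offsetY ≠ 0)
    (hx : (a.restrict (pderiv 1 f)).eval (a.foot x) ≠ 0) (h_sweep : eval x (sweep f a) = 0) :
    relativeSlope f a (a.foot x) = eval x a.offsetY / eval x a.offsetX := by
  rw [eval_sweep (a.eval_footNumerator_eq_foot_mul hY)] at h_sweep
  have h_eq := (mul_eq_zero.1 h_sweep).resolve_left (pow_ne_zero _ hY)
  rw [relativeSlope, div_eq_div_iff hx hX]
  linear_combination -h_eq

/-- Two null lines have a common point. -/
def Meets (a b : NullLine K) : Prop := ∃ s, a.point s = b.point s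

lemma infinite_generic_heights [Infinite K] (hab : ¬ b.Meets a) {q : K[X]} (hq : q ≠ 0)
    (hX : b.restrict a.offsetX ≠ 0) (hY : b.restrict a.offsetY ≠ 0) :
    {z | eval (b.point z) a.offsetX ≠ 0 ∧ eval (b.point z) a.offsetY ≠ 0 ∧
      q.eval (a.foot (b.point z)) ≠ 0}.Infinite := by
  classical
  have h_prod : ∏ t ∈ q.roots.toFinset, b.restrict (a.footNumerator - C t * a.offsetY) ≠ 0 := by
    refine Finset.prod_ne_zero_iff.2 fun t _ h => hab ⟨t, ?_⟩
    rw [map_sub, map_mul, restrict_C, sub_eq_zero] at h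
    exact point_eq_of_restrict_footNumerator_eq h
  refine (infinite_setOf_eval_ne_zero (mul_ne_zero (mul_ne_zero hX hY) h_prod)).mono fun z hz => ?_
  rw [Set.mem_ofPred_eq, Polynomial.eval_mul, Polynomial.eval_mul, Polynomial.eval_prod] at hz
  obtain ⟨hzX, hzY⟩ := mul_ne_zero_iff.1 (left_ne_zero_of_mul hz)
  rw [eval_restrict] at hzX hzY
  refine ⟨hzX, hzY, fun h_root => ?_⟩
  refine Finset.prod_ne_zero_iff.1 (right_ne_zero_of_mul hz) (a.foot (b.point z))
    (Multiset.mem_toFinset.2 ((Polynomial.mem_roots hq).2 h_root)) ?_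
  rw [eval_restrict, map_sub, map_mul, a.eval_footNumerator_eq_foot_mul hzY, eval_C, sub_self]

/-- Through a generic point of `b` passes a transversal of `a` contained in the zero set of `f`.
It meets the sphere through `a` and `b` in two points, so it is contained in this sphere. -/
lemma dvd_sphere_of_dvd_sweep [Infinite K] (hf : Irreducible f) (h_sweep : f ∣ sweep f a)
    (h_one : a.restrict (pderiv 1 f) ≠ 0)
    (h_transversal : ∀ s, (a.restrict (pderiv 1 f)).eval s ≠ 0 →
      (a.transversal s (relativeSlope f a s)).restrict f = 0)
    (hb : b.restrict f = 0) (hab : ¬ b.Meets a) (hX : b.restrict a.offsetX ≠ 0)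
    (hY : b.restrict a.offsetY ≠ 0) {v : Fin 5 → K} (hva : a.restrict (sphere v) = 0)
    (hvb : b.restrict (sphere v) = 0) : f ∣ sphere v := by
  let T (z : K) := a.transversal (a.foot (b.point z)) (relativeSlope f a (a.foot (b.point z)))
  have hT_foot (z : K) : (T z).point (a.foot (b.point z)) = a.point (a.foot (b.point z)) :=
    transversal_point_self _ _ _
  have hT_height {z : K} (hz : eval (b.point z) a.offsetX ≠ 0 ∧ eval (b.point z) a.offsetY ≠ 0 ∧
      (a.restrict (pderiv 1 f)).eval (a.foot (b.point z)) ≠ 0) : (T z).point z = b.point z := by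
    obtain ⟨g, hg⟩ := h_sweep
    have hz_sweep : eval (b.point z) (sweep f a) = 0 := by
      rw [hg, map_mul, ← eval_restrict, hb, Polynomial.eval_zero, zero_mul]
    simp only [T, relativeSlope_foot_eq hz.1 hz.2.1 hz.2.2 hz_sweep]
    exact transversal_foot_point hz.1 hz.2.1
  refine dvd_of_infinite_restrict_eq_zero hf
    ((infinite_generic_heights hab h_one hX hY).image (f := T) ?_) ?_
  · intro z hz w hw hzw
    by_contra hne
    have hTb : T z = b := eq_of_point_eq_of_point_eq hne (hT_height hz) (hzw ▸ hT_height hw)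
    exact hab ⟨_, hTb ▸ hT_foot z⟩
  · rintro _ ⟨z, hz, rfl⟩
    refine ⟨h_transversal _ hz.2.2,
      restrict_sphere_eq_zero_of_two_points (foot_ne_height hz.1 hz.2.1) ?_ ?_⟩
    · rw [hT_foot, ← eval_restrict, hva, Polynomial.eval_zero]
    · rw [point_two, hT_height hz, ← eval_restrict, hvb, Polynomial.eval_zero]

lemma exists_ne_restrict_offset_ne_zero [Infinite K] (hf : Irreducible f)
    (h_sphere : ∀ v : Fin 5 → K, v ≠ 0 → ¬ f ∣ sphere v) {R : Finset (NullLine K)}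
    (hR : ∀ l ∈ R, l.restrict f = 0) (hcard : 12 * f.totalDegree ^ 2 < R.card) (a : NullLine K) :
    ∃ b ∈ R, b ≠ a ∧ b.restrict a.offsetX ≠ 0 ∧ b.restrict a.offsetY ≠ 0 := by
  classical
  have h_few {v : Fin 5 → K} (hv : v ≠ 0) :
      (R.filter fun l => l.restrict (sphere v) = 0).card ≤ 5 * f.totalDegree := by
    refine (card_le_of_irreducible_of_not_dvd hf (h_sphere v hv)
      (fun l hl => hR l (Finset.mem_filter.1 hl).1) fun l hl => (Finset.mem_filter.1 hl).2).trans ?_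
    nlinarith [totalDegree_sphere_le v]
  have hX := h_few (v := ![0, 1, 0, -a.slope, -a.x₀]) fun h => by simpa using congrFun h 1
  have hY := h_few (v := ![0, -2 * a.slope, 1, a.slope ^ 2, 2 * a.slope * a.x₀ - a.y₀])
    fun h => by simpa using congrFun h 2
  by_contra! h_all
  have h_cover : R ⊆ {a} ∪ ((R.filter fun l => l.restrict a.offsetX = 0) ∪
      R.filter fun l => l.restrict a.offsetY = 0) := by
    intro l hl
    simp only [Finset.mem_union, Finset.mem_singleton, Finset.mem_filter]
    have := h_all l hl
    tauto
  have h_le := (Finset.card_le_card h_cover).trans ((Finset.card_union_le _ _).trans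
    (add_le_add_right (Finset.card_union_le _ _) _))
  rw [Finset.card_singleton] at h_le
  have hf_pos := totalDegree_pos_of_irreducible hf
  rw [offsetX, offsetY] at h_le
  nlinarith

theorem exists_dvd_sphere [Infinite K] (p : ℕ) [CharP K p] (hf : Irreducible f)
    (hfp : f.totalDegree < p) {R : Finset (NullLine K)}
    (h_skew : (R : Set (NullLine K)).Pairwise fun l l' => ¬ l.Meets l')
    (hR : ∀ l ∈ R, IsRich f l) (hcard : 12 * f.totalDegree ^ 2 < R.card) :
    ∃ v : Fin 5 → K, v ≠ 0 ∧ f ∣ sphere v := by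
  by_contra! h_sphere
  obtain ⟨h₁, h₀⟩ := dvd_mongeRemainder hf hR hcard
  obtain ⟨a, haR, h_one⟩ := exists_restrict_pderiv_one_ne_zero p hf hfp hR hcard
  obtain ⟨b, hbR, hba, hX, hY⟩ :=
    exists_ne_restrict_offset_ne_zero hf h_sphere (fun l hl => (hR l hl).1) hcard a
  have h_transversal (s : K) (hs : (a.restrict (pderiv 1 f)).eval s ≠ 0) :=
    restrict_transversal_relativeSlope_eq_zero p hfp h₁ h₀ (hR a haR).1 hs
  have h_sweep := dvd_sweep hf ((hR a haR).slopeNumerator_ne_zero h_one) h_one h_transversal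
  obtain ⟨v, hv, hva, hvb⟩ := exists_sphere_restrict_eq_zero a b
  exact h_sphere v hv (dvd_sphere_of_dvd_sweep hf h_sweep h_one h_transversal (hR b hbR).1
    (h_skew hbR haR hba) hX hY hva hvb)

end NullLine

end Sweep

/-! ### Incidences between two families of null lines -/

section Incidences

variable {K : Type*} [Field K]

open Classical in
/-- The number of lines of `B` that meet `a`. -/
noncomputable def NullLine.degree (a : NullLine K) (B : Finset (NullLine K)) : ℕ :=
  (B.filter a.Meets).card

/-- The number of meeting pairs in `A × B`. -/
noncomputable def incidences (A B : Finset (NullLine K)) : ℕ :=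
  ∑ a ∈ A, a.degree B

variable {A B : Finset (NullLine K)} {f : MvPolynomial (Fin 3) K}

namespace NullLine

lemma meets_comm {a b : NullLine K} : a.Meets b ↔ b.Meets a := by
  simp only [Meets, eq_comm]

lemma degree_le_card (a : NullLine K) (B : Finset (NullLine K)) : a.degree B ≤ B.card := by
  classical exact Finset.card_filter_le _ _

lemma degree_mono (a : NullLine K) (h : A ⊆ B) : a.degree A ≤ a.degree B := by
  classical exact Finset.card_le_card (Finset.filter_subset_filter _ h)

lemma exists_finset_card_eq_degree (a : NullLine K)
    (hB : (B : Set (NullLine K)).Pairwise fun l l' => ¬ l.Meets l') :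
    ∃ s : Finset K, s.card = a.degree B ∧ ∀ x ∈ s, ∃ b ∈ B, b.point x = a.point x := by
  classical
  have h_meets : ∀ b ∈ B.filter a.Meets, ∃ x, a.point x = b.point x :=
    fun b hb => (Finset.mem_filter.1 hb).2
  choose! height h_height using h_meets
  refine ⟨(B.filter a.Meets).image height, Finset.card_image_of_injOn fun b hb b' hb' h_eq => ?_,
    fun x hx => ?_⟩
  · refine hB.eq (Finset.mem_filter.1 hb).1 (Finset.mem_filter.1 hb').1 (not_not.2 ⟨height b, ?_⟩)
    rw [← h_height b hb, h_eq, ← h_height b' hb']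
  · obtain ⟨b, hb, rfl⟩ := Finset.mem_image.1 hx
    exact ⟨b, (Finset.mem_filter.1 hb).1, (h_height b hb).symm⟩

lemma degree_le_totalDegree {a : NullLine K} (ha : a.restrict f ≠ 0)
    (hB : (B : Set (NullLine K)).Pairwise fun l l' => ¬ l.Meets l')
    (hBf : ∀ b ∈ B, b.restrict f = 0) : a.degree B ≤ f.totalDegree := by
  obtain ⟨s, hs_card, hs⟩ := a.exists_finset_card_eq_degree hB
  by_contra! h_lt
  refine ha (restrict_eq_zero_of_totalDegree_lt_card (s := s) (fun x hx => ?_) (hs_card ▸ h_lt))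
  obtain ⟨b, hb, hbx⟩ := hs x hx
  rw [← hbx, ← eval_restrict, hBf b hb, Polynomial.eval_zero]

lemma isRich_of_lt_degree {a : NullLine K} (ha : a.restrict f = 0)
    (hB : (B : Set (NullLine K)).Pairwise fun l l' => ¬ l.Meets l')
    (hBf : ∀ b ∈ B, b.restrict f = 0) (h_slope : ∀ b ∈ B, b.slope ≠ a.slope)
    (h_lt : 4 * f.totalDegree < a.degree B) : IsRich f a := by
  obtain ⟨s, hs_card, hs⟩ := a.exists_finset_card_eq_degree hB
  refine ⟨ha, s, hs_card ▸ h_lt, fun x hx => ?_⟩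
  obtain ⟨b, hb, hbx⟩ := hs x hx
  exact ⟨b, hBf b hb, hbx, h_slope b hb⟩

end NullLine

open NullLine

lemma incidences_comm (A B : Finset (NullLine K)) : incidences A B = incidences B A := by
  classical
  have h_below : ∀ b ∈ B, (A.filter fun a => a.Meets b).card = b.degree A :=
    fun b _ => congrArg _ (Finset.filter_congr fun a _ => meets_comm)
  exact (Finset.sum_card_bipartiteAbove_eq_sum_card_bipartiteBelow Meets).trans
    (Finset.sum_congr rfl h_below)

lemma incidences_le_mul_card {e : ℕ} (h : ∀ a ∈ A, a.degree B ≤ e) :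
    incidences A B ≤ e * A.card :=
  (Finset.sum_le_card_nsmul A _ e h).trans_eq (mul_comm _ _)

lemma incidences_le_card_mul_card (A B : Finset (NullLine K)) :
    incidences A B ≤ A.card * B.card :=
  (incidences_le_mul_card fun a _ => a.degree_le_card B).trans_eq (mul_comm _ _)

lemma incidences_eq_filter_left (A B : Finset (NullLine K)) (P : NullLine K → Prop)
    [DecidablePred P] :
    incidences A B = incidences (A.filter P) B + incidences (A.filter (¬ P ·)) B :=
  (Finset.sum_filter_add_sum_filter_not A P _).symm

lemma incidences_eq_filter_right (A B : Finset (NullLine K)) (P : NullLine K → Prop)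
    [DecidablePred P] :
    incidences A B = incidences A (B.filter P) + incidences A (B.filter (¬ P ·)) := by
  rw [incidences_comm, incidences_eq_filter_left B A P, incidences_comm A, incidences_comm A]

open Classical in
lemma incidences_le_add_filter_lt_degree (A B : Finset (NullLine K)) (e : ℕ) :
    incidences A B ≤ e * (A.card + B.card) +
      incidences (A.filter (e < ·.degree B)) (B.filter (e < ·.degree A)) := by
  have h_left : incidences (A.filter (¬ e < ·.degree B)) B ≤ e * A.card :=
    (incidences_le_mul_card fun a ha => not_lt.1 (Finset.mem_filter.1 ha).2).trans
      (Nat.mul_le_mul_left _ (Finset.card_filter_le _ _))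
  have h_right : incidences (A.filter (e < ·.degree B)) (B.filter (¬ e < ·.degree A)) ≤
      e * B.card := by
    rw [incidences_comm]
    exact (incidences_le_mul_card fun b hb => (b.degree_mono (Finset.filter_subset _ _)).trans
      (not_lt.1 (Finset.mem_filter.1 hb).2)).trans
        (Nat.mul_le_mul_left _ (Finset.card_filter_le _ _))
  rw [incidences_eq_filter_left A B (e < ·.degree B),
    incidences_eq_filter_right (A.filter _) B (e < ·.degree A)]
  linarith

open Classical in
/-- The lines of `A` that lie on the surface `f = 0`. -/
noncomputable def linesOn (f : MvPolynomial (Fin 3) K) (A : Finset (NullLine K)) :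
    Finset (NullLine K) :=
  A.filter (·.restrict f = 0)

open Classical in
/-- The lines of `A` that do not lie on the surface `f = 0`. -/
noncomputable def linesOff (f : MvPolynomial (Fin 3) K) (A : Finset (NullLine K)) :
    Finset (NullLine K) :=
  A.filter (¬ ·.restrict f = 0)

lemma mem_linesOn {l : NullLine K} : l ∈ linesOn f A ↔ l ∈ A ∧ l.restrict f = 0 := by
  classical exact Finset.mem_filter

lemma mem_linesOff {l : NullLine K} : l ∈ linesOff f A ↔ l ∈ A ∧ l.restrict f ≠ 0 := by
  classical exact Finset.mem_filter

lemma linesOn_subset (f : MvPolynomial (Fin 3) K) (A : Finset (NullLine K)) : linesOn f A ⊆ A :=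
  fun _ hl => (mem_linesOn.1 hl).1

lemma linesOff_subset (f : MvPolynomial (Fin 3) K) (A : Finset (NullLine K)) :
    linesOff f A ⊆ A :=
  fun _ hl => (mem_linesOff.1 hl).1

lemma card_linesOn_add_card_linesOff (f : MvPolynomial (Fin 3) K) (A : Finset (NullLine K)) :
    (linesOn f A).card + (linesOff f A).card = A.card := by
  classical exact Finset.card_filter_add_card_filter_not _

lemma linesOn_mono (h : A ⊆ B) : linesOn f A ⊆ linesOn f B := by
  classical exact Finset.filter_subset_filter _ h

lemma linesOn_subset_of_dvd {g : MvPolynomial (Fin 3) K} (hfg : f ∣ g)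
    (A : Finset (NullLine K)) : linesOn f A ⊆ linesOn g A := by
  intro l hl
  rw [mem_linesOn] at hl ⊢
  exact ⟨hl.1, zero_dvd_iff.1 (hl.2 ▸ map_dvd l.restrict hfg)⟩

/-- Two families of pairwise skew null lines with no common slope, at most `k` lines of the first
of which lie on any one sphere. -/
structure GenericPair (k : ℕ) (A B : Finset (NullLine K)) : Prop where
  skew_left : (A : Set (NullLine K)).Pairwise fun l l' => ¬ l.Meets l'
  skew_right : (B : Set (NullLine K)).Pairwise fun l l' => ¬ l.Meets l'
  slope_ne : ∀ a ∈ A, ∀ b ∈ B, a.slope ≠ b.slope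
  card_linesOn_sphere_le : ∀ v : Fin 5 → K, v ≠ 0 → (linesOn (sphere v) A).card ≤ k

namespace GenericPair

variable {k : ℕ}

lemma mono {A' B' : Finset (NullLine K)} (h : GenericPair k A B) (hA : A' ⊆ A) (hB : B' ⊆ B) :
    GenericPair k A' B' where
  skew_left := h.skew_left.mono (Finset.coe_subset.2 hA)
  skew_right := h.skew_right.mono (Finset.coe_subset.2 hB)
  slope_ne a ha b hb := h.slope_ne a (hA ha) b (hB hb)
  card_linesOn_sphere_le v hv :=
    (Finset.card_le_card (linesOn_mono hA)).trans (h.card_linesOn_sphere_le v hv)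

lemma disjoint (h : GenericPair k A B) : Disjoint A B :=
  Finset.disjoint_left.2 fun a ha hb => h.slope_ne a ha a hb rfl

lemma incidences_le_split (h : GenericPair k A B) (f : MvPolynomial (Fin 3) K) :
    incidences A B ≤ incidences (linesOn f A) (linesOn f B) +
      f.totalDegree * (A.card + B.card) + incidences (linesOff f A) (linesOff f B) := by
  classical
  have h_off_on : incidences (linesOff f A) (linesOn f B) ≤ f.totalDegree * A.card :=
    (incidences_le_mul_card fun a ha => degree_le_totalDegree (mem_linesOff.1 ha).2
      (h.mono subset_rfl (linesOn_subset f B)).skew_right fun b hb => (mem_linesOn.1 hb).2).trans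
        (Nat.mul_le_mul_left _ (Finset.card_le_card (linesOff_subset f A)))
  have h_on_off : incidences (linesOn f A) (linesOff f B) ≤ f.totalDegree * B.card := by
    rw [incidences_comm]
    exact (incidences_le_mul_card fun b hb => degree_le_totalDegree (mem_linesOff.1 hb).2
      (h.mono (linesOn_subset f A) subset_rfl).skew_left fun a ha => (mem_linesOn.1 ha).2).trans
        (Nat.mul_le_mul_left _ (Finset.card_le_card (linesOff_subset f B)))
  have h_split : incidences A B =
      incidences (linesOn f A) (linesOn f B) + incidences (linesOn f A) (linesOff f B) +
      (incidences (linesOff f A) (linesOn f B) + incidences (linesOff f A) (linesOff f B)) := by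
    simp only [linesOn, linesOff]
    rw [incidences_eq_filter_left A B (·.restrict f = 0),
      incidences_eq_filter_right (A.filter (·.restrict f = 0)) B (·.restrict f = 0),
      incidences_eq_filter_right (A.filter (¬ ·.restrict f = 0)) B (·.restrict f = 0)]
  linarith

lemma incidences_linesOn_le_of_dvd_sphere (h : GenericPair k A B) {v : Fin 5 → K} (hv : v ≠ 0)
    (hfv : f ∣ sphere v) :
    incidences (linesOn f A) (linesOn f B) ≤ k * ((linesOn f A).card + (linesOn f B).card) := by
  have hA : (linesOn f A).card ≤ k :=
    (Finset.card_le_card (linesOn_subset_of_dvd hfv A)).trans (h.card_linesOn_sphere_le v hv)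
  exact (incidences_le_card_mul_card _ _).trans (Nat.mul_le_mul hA (Nat.le_add_left _ _))

open Classical in
lemma exists_rich_subpair [Infinite K] (h : GenericPair k A B) (p : ℕ) [CharP K p]
    (hf : Irreducible f) (hfp : f.totalDegree < p)
    (h_sphere : ∀ v : Fin 5 → K, v ≠ 0 → ¬ f ∣ sphere v) :
    ∃ A' ⊆ linesOn f A, ∃ B' ⊆ linesOn f B, A'.card + B'.card ≤ 24 * f.totalDegree ^ 2 ∧
      incidences (linesOn f A) (linesOn f B) ≤
        4 * f.totalDegree * ((linesOn f A).card + (linesOn f B).card) + incidences A' B' := by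
  have h_on := h.mono (linesOn_subset f A) (linesOn_subset f B)
  have h_few {R : Finset (NullLine K)}
      (h_skew : (R : Set (NullLine K)).Pairwise fun l l' => ¬ l.Meets l')
      (hR : ∀ l ∈ R, IsRich f l) : R.card ≤ 12 * f.totalDegree ^ 2 := by
    by_contra! h_lt
    obtain ⟨v, hv, hfv⟩ := exists_dvd_sphere p hf hfp h_skew hR h_lt
    exact h_sphere v hv hfv
  refine ⟨_, Finset.filter_subset _ _, _, Finset.filter_subset _ _, ?_,
    incidences_le_add_filter_lt_degree _ _ _⟩
  have hA := h_few (h_on.mono (Finset.filter_subset _ _) subset_rfl).skew_left fun a ha =>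
    have ⟨haf, ha_deg⟩ := Finset.mem_filter.1 ha
    isRich_of_lt_degree (mem_linesOn.1 haf).2 h_on.skew_right (fun b hb => (mem_linesOn.1 hb).2)
      (fun b hb => (h_on.slope_ne a haf b hb).symm) ha_deg
  have hB := h_few (h_on.mono subset_rfl (Finset.filter_subset _ _)).skew_right fun b hb =>
    have ⟨hbf, hb_deg⟩ := Finset.mem_filter.1 hb
    isRich_of_lt_degree (mem_linesOn.1 hbf).2 h_on.skew_left (fun a ha => (mem_linesOn.1 ha).2)
      (fun a ha => h_on.slope_ne a ha b hbf) hb_deg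
  linarith

lemma exists_irreducible_card_linesOn_lt (h : GenericPair k A B) {m M : ℕ} (hm : 32 ≤ m)
    (hmn : m ^ 2 ≤ A.card + B.card) (hM : 16 * M ≤ m) :
    ∃ f : MvPolynomial (Fin 3) K, Irreducible f ∧ f.totalDegree ≤ 3 * m ∧
      M * f.totalDegree < (linesOn f A).card + (linesOn f B).card := by
  classical
  obtain ⟨L, hL, hL_card⟩ := Finset.exists_subset_card_eq (s := A ∪ B) (n := m ^ 2 / 4)
    (by rw [Finset.card_union_of_disjoint h.disjoint]; lia)
  obtain ⟨P, hP, hP_deg, hPL⟩ := exists_ne_zero_restrict_eq_zero L (n := m)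
    (by rw [hL_card]; have := Nat.div_mul_le_self (m ^ 2) 4; nlinarith)
  have h_lt : M * P.totalDegree < (L.filter fun l => l.restrict P = 0).card := by
    rw [Finset.filter_true_of_mem hPL, hL_card]
    have : M * P.totalDegree ≤ M * (3 * m) := Nat.mul_le_mul_left _ hP_deg
    have : 16 * (M * m) ≤ m ^ 2 := by nlinarith
    have : 32 * 32 ≤ m ^ 2 := by nlinarith
    lia
  obtain ⟨f, hf, hfP, hf_lt⟩ := exists_irreducible_dvd_card_lt hP h_lt
  refine ⟨f, hf, (totalDegree_le_of_dvd_of_isDomain hfP hP).trans hP_deg, hf_lt.trans_le ?_⟩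
  refine (Finset.card_le_card ?_).trans (Finset.card_union_le _ _)
  rw [linesOn, linesOn, ← Finset.filter_union]
  exact Finset.filter_subset_filter _ hL

lemma exists_surface (h : GenericPair k A B) {w : ℕ} (hw : 1280 ≤ w)
    (hwn : w ^ 2 ≤ A.card + B.card) :
    ∃ f : MvPolynomial (Fin 3) K, Irreducible f ∧ 10 * f.totalDegree ≤ w ∧
      (w + 1) * f.totalDegree ≤ 960 * ((linesOn f A).card + (linesOn f B).card) := by
  obtain ⟨m, M, hm, hmw, hwm, hMm, hmM⟩ : ∃ m M, 32 ≤ m ∧ 40 * m ≤ w ∧ w < 40 * (m + 1) ∧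
      16 * M ≤ m ∧ m < 16 * (M + 1) := ⟨w / 40, w / 40 / 16, by lia, by lia, by lia, by lia, by lia⟩
  obtain ⟨f, hf, hf_deg, hf_lt⟩ := h.exists_irreducible_card_linesOn_lt hm (by nlinarith) hMm
  refine ⟨f, hf, by lia, ?_⟩
  calc (w + 1) * f.totalDegree ≤ 960 * M * f.totalDegree := Nat.mul_le_mul_right _ (by lia)
    _ ≤ 960 * ((linesOn f A).card + (linesOn f B).card) := by
      rw [mul_assoc]
      exact Nat.mul_le_mul_left _ hf_lt.le

end GenericPair

end Incidences

section IncidenceBound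

lemma incidence_recursion {n z y : ℕ} {e k I I_on I_off : ℝ} (he : 0 ≤ e) (hn : z + y = n)
    (h_card : (n.sqrt + 1) * e ≤ 960 * z) (h_on : I_on ≤ (4 * e + 4800 * √n + k) * z)
    (h_off : I_off ≤ 9600 * (y * √y) + k * y) (h_split : I ≤ I_on + e * n + I_off) :
    I ≤ 9600 * (n * √n) + k * n := by
  have h_mul : √n * e ≤ 960 * z :=
    (mul_le_mul_of_nonneg_right Real.real_sqrt_le_nat_sqrt_succ he).trans h_card
  have h_en : e * n ≤ 960 * (z * √n) := by
    nth_rw 1 [← Real.mul_self_sqrt n.cast_nonneg]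
    nlinarith [Real.sqrt_nonneg n]
  have h_ez : e * z ≤ e * n := by gcongr; exact hn ▸ Nat.le_add_right _ _
  have h_sqrt : y * √y ≤ y * √n := by gcongr; exact hn ▸ Nat.le_add_left _ _
  calc I ≤ (4 * e + 4800 * √n + k) * z + e * n + (9600 * (y * √y) + k * y) := by linarith
    _ ≤ 9600 * ((z + y : ℕ) * √n) + k * (z + y : ℕ) := by push_cast; linarith
    _ = 9600 * (n * √n) + k * n := by rw [hn]

variable {K : Type*} [Field K] {A B : Finset (NullLine K)} {f : MvPolynomial (Fin 3) K}

namespace GenericPair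

variable {k : ℕ}

lemma incidences_linesOn_le [Infinite K] (h : GenericPair k A B) {p : ℕ} [CharP K p]
    (hf : Irreducible f) (hfp : f.totalDegree < p) {r : ℝ} (hfr : 10 * f.totalDegree ≤ r)
    (h_rec : ∀ A' ⊆ linesOn f A, ∀ B' ⊆ linesOn f B, ((A'.card + B'.card : ℕ) : ℝ) < r ^ 2 →
      (incidences A' B' : ℝ) ≤ 9600 * ((A'.card + B'.card : ℕ) * √(A'.card + B'.card : ℕ)) +
        k * (A'.card + B'.card : ℕ)) :
    (incidences (linesOn f A) (linesOn f B) : ℝ) ≤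
      (4 * f.totalDegree + 4800 * r + k) * ((linesOn f A).card + (linesOn f B).card : ℕ) := by
  set z := (linesOn f A).card + (linesOn f B).card
  have he : (1 : ℝ) ≤ f.totalDegree := by exact_mod_cast totalDegree_pos_of_irreducible hf
  have hr : 0 ≤ r := by linarith
  by_cases h_sphere : ∃ v : Fin 5 → K, v ≠ 0 ∧ f ∣ sphere v
  · obtain ⟨v, hv, hfv⟩ := h_sphere
    have h_le : (incidences (linesOn f A) (linesOn f B) : ℝ) ≤ k * z := by
      exact_mod_cast h.incidences_linesOn_le_of_dvd_sphere hv hfv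
    refine h_le.trans (mul_le_mul_of_nonneg_right ?_ z.cast_nonneg)
    linarith
  · push Not at h_sphere
    obtain ⟨A', hA', B', hB', h_card, h_le⟩ := h.exists_rich_subpair p hf hfp h_sphere
    have hyz : A'.card + B'.card ≤ z :=
      add_le_add (Finset.card_le_card hA') (Finset.card_le_card hB')
    replace h_rec := h_rec A' hA' B' hB'
    set y := A'.card + B'.card
    have hye : (y : ℝ) ≤ 24 * f.totalDegree ^ 2 := by exact_mod_cast h_card
    have h_sqrt : √y ≤ r / 2 := Real.sqrt_le_iff.2 ⟨by positivity, by nlinarith⟩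
    replace hyz : (y : ℝ) ≤ z := by exact_mod_cast hyz
    replace h_le : (incidences (linesOn f A) (linesOn f B) : ℝ) ≤
        4 * f.totalDegree * z + incidences A' B' := by exact_mod_cast h_le
    calc _ ≤ 4 * f.totalDegree * (z : ℝ) + (9600 * (y * √y) + k * y) :=
          h_le.trans (by gcongr; exact h_rec (by nlinarith))
      _ ≤ 4 * f.totalDegree * (z : ℝ) + (9600 * (z * (r / 2)) + k * z) := by gcongr
      _ = _ := by ring

lemma incidences_le_of_sqrt_lt {n : ℕ} (hn : A.card + B.card = n) (h_lt : n.sqrt < 1280) :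
    (incidences A B : ℝ) ≤ 9600 * (n * √n) := by
  have h_sq : (incidences A B : ℝ) ≤ n * n := by
    exact_mod_cast (incidences_le_card_mul_card A B).trans
      (Nat.mul_le_mul (hn ▸ Nat.le_add_right _ _) (hn ▸ Nat.le_add_left _ _))
  have h_sqrt : √n ≤ 9600 := by
    have : (n.sqrt : ℝ) < 1280 := by exact_mod_cast h_lt
    linarith [Real.real_sqrt_le_nat_sqrt_succ (a := n)]
  calc (incidences A B : ℝ) ≤ n * (√n * √n) := by rwa [Real.mul_self_sqrt n.cast_nonneg]
    _ ≤ n * (9600 * √n) := by gcongr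
    _ = 9600 * (n * √n) := by ring

theorem incidences_le [Infinite K] {p n : ℕ} [CharP K p] (h : GenericPair k A B)
    (hn : A.card + B.card = n) (hnp : n ≤ p ^ 2) :
    (incidences A B : ℝ) ≤ 9600 * (n * √n) + k * n := by
  induction n using Nat.strong_induction_on generalizing A B with
  | _ n ih =>
  by_cases h_small : n.sqrt < 1280
  · have := incidences_le_of_sqrt_lt hn h_small
    exact this.trans (le_add_of_nonneg_right (by positivity))
  obtain ⟨f, hf, hf_deg, hf_card⟩ := h.exists_surface (not_lt.1 h_small) (hn ▸ Nat.sqrt_le' n)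
  have hf_pos := totalDegree_pos_of_irreducible hf
  have hfp : f.totalDegree < p := by
    have : n.sqrt ≤ p := (Nat.sqrt_le_sqrt hnp).trans_eq (Nat.sqrt_eq' p)
    lia
  have hf_sqrt : 10 * (f.totalDegree : ℝ) ≤ √n :=
    le_trans (by exact_mod_cast hf_deg) Real.nat_sqrt_le_real_sqrt
  have h_on := h.incidences_linesOn_le hf hfp hf_sqrt fun A' hA' B' hB' h_lt => by
    rw [Real.sq_sqrt n.cast_nonneg, Nat.cast_lt] at h_lt
    exact ih _ h_lt (h.mono (hA'.trans (linesOn_subset f A)) (hB'.trans (linesOn_subset f B))) rfl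
      (h_lt.le.trans hnp)
  have h_cards : (linesOn f A).card + (linesOn f B).card +
      ((linesOff f A).card + (linesOff f B).card) = n := by
    rw [← hn, ← card_linesOn_add_card_linesOff f A, ← card_linesOn_add_card_linesOff f B]
    ring
  have h_off := ih ((linesOff f A).card + (linesOff f B).card) (by lia)
    (h.mono (linesOff_subset f A) (linesOff_subset f B)) rfl (by lia)
  have h_split := hn ▸ h.incidences_le_split f
  exact incidence_recursion f.totalDegree.cast_nonneg h_cards (by exact_mod_cast hf_card)
    h_on h_off (by exact_mod_cast h_split)

end GenericPair

end IncidenceBound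

/-! ### The two families of lines of a grid -/

section Lines

lemma quadratic_eq_zero_iff {R : Type*} [Semiring R] {a b c : R} :
    Polynomial.C a * Polynomial.X ^ 2 + Polynomial.C b * Polynomial.X + Polynomial.C c = 0 ↔
      a = 0 ∧ b = 0 ∧ c = 0 := by
  refine ⟨fun h => ?_, fun ⟨ha, hb, hc⟩ => by simp [ha, hb, hc]⟩
  have h_coeff (i : ℕ) := congrArg (Polynomial.coeff · i) h
  refine ⟨?_, ?_, ?_⟩
  · simpa [Polynomial.coeff_X, Polynomial.coeff_C] using h_coeff 2
  · simpa [Polynomial.coeff_X, Polynomial.coeff_C] using h_coeff 1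
  · simpa using h_coeff 0

lemma exists_finset_roots_quadratic {R : Type*} [CommRing R] [IsDomain R] {a b c : R}
    (h : a ≠ 0 ∨ b ≠ 0) :
    ∃ s : Finset R, s.card ≤ 2 ∧ ∀ x, a * x ^ 2 + b * x + c = 0 → x ∈ s := by
  classical
  set q := Polynomial.C a * Polynomial.X ^ 2 + Polynomial.C b * Polynomial.X + Polynomial.C c
  have hq : q ≠ 0 := fun h0 => by
    have := quadratic_eq_zero_iff.1 h0
    tauto
  refine ⟨q.roots.toFinset, (Multiset.toFinset_card_le _).trans
    ((Polynomial.card_roots' q).trans Polynomial.natDegree_quadratic_le), fun x hx => ?_⟩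
  rw [Multiset.mem_toFinset, Polynomial.mem_roots hq, Polynomial.IsRoot.def]
  simpa [q] using hx

variable {F K : Type*} [Field F] [Field K] [Algebra F K] {ε : K}

lemma ne_zero_of_transcendental (hε : Transcendental F ε) : ε ≠ 0 :=
  fun h => hε (h ▸ isAlgebraic_zero)

lemma coeff_eq_zero_of_transcendental {a b c : F} (hε : Transcendental F ε)
    (h : algebraMap F K a * ε ^ 2 + algebraMap F K b * ε + algebraMap F K c = 0) :
    a = 0 ∧ b = 0 ∧ c = 0 :=
  quadratic_eq_zero_iff.1 (transcendental_iff.1 hε _ (by simpa using h))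

namespace NullLine

lemma Meets.add_slope_mul_sub {a b : NullLine K} (h : a.Meets b) :
    (a.slope + b.slope) * (b.x₀ - a.x₀) = b.y₀ - a.y₀ := by
  obtain ⟨s, hs⟩ := h
  obtain ⟨hx, hy⟩ := point_eq_iff.1 hs
  linear_combination hy - (a.slope + b.slope) * hx

lemma meets_of_add_slope_mul_sub {a b : NullLine K} (h_slope : a.slope ≠ b.slope)
    (h : (a.slope + b.slope) * (b.x₀ - a.x₀) = b.y₀ - a.y₀) : a.Meets b := by
  have h_sub : a.slope - b.slope ≠ 0 := sub_ne_zero.2 h_slope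
  refine ⟨(b.x₀ - a.x₀) / (a.slope - b.slope), point_eq_iff.2 ⟨?_, ?_⟩⟩
  · field_simp
    ring
  · field_simp
    linear_combination (a.slope - b.slope) * h

end NullLine

/-- The first family of null lines, indexed by triples `(c, d, d')`. Together with `rightLine` it
turns the equation `c₁ * (d₂ - d₁) = c₂ * (d₂' - d₁')` into an incidence. A transcendental `ε`
makes the lines of each family pairwise skew. -/
noncomputable def leftLine (ε : K) (t : F × F × F) : NullLine K where
  slope := algebraMap F K t.1
  x₀ := -algebraMap F K t.1 * algebraMap F K t.2.1
  y₀ := -algebraMap F K t.1 ^ 2 * algebraMap F K t.2.1 + ε ^ 2 * algebraMap F K t.1 +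
    ε * algebraMap F K t.2.2

/-- The second family of null lines, indexed by triples `(c, d, d')`; see `leftLine`. -/
noncomputable def rightLine (ε : K) (t : F × F × F) : NullLine K where
  slope := -ε / algebraMap F K t.1
  x₀ := ε / algebraMap F K t.1 * algebraMap F K t.2.1 - ε ^ 2
  y₀ := -(ε / algebraMap F K t.1) ^ 2 * algebraMap F K t.2.1 +
    ε ^ 2 * (ε / algebraMap F K t.1) + ε * algebraMap F K t.2.2

lemma leftLine_skew (hε : Transcendental F ε) {t t' : F × F × F} (ht : t.1 ≠ 0)
    (h : (leftLine ε t).Meets (leftLine ε t')) : t = t' := by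
  obtain ⟨c, d, d'⟩ := t
  obtain ⟨b, e, e'⟩ := t'
  have h_rel := h.add_slope_mul_sub
  simp only [leftLine] at h_rel
  obtain ⟨hc, hd', hd⟩ := coeff_eq_zero_of_transcendental hε (a := b - c) (b := e' - d')
    (c := c * b * (e - d)) (by simp only [map_sub, map_mul]; linear_combination -h_rel)
  obtain rfl := sub_eq_zero.1 hc
  obtain rfl := sub_eq_zero.1 hd'
  obtain rfl := sub_eq_zero.1 ((mul_eq_zero.1 hd).resolve_left (mul_ne_zero ht ht))
  rfl

lemma rightLine_skew (hε : Transcendental F ε) {t t' : F × F × F} (ht : t.1 ≠ 0) (ht' : t'.1 ≠ 0)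
    (h : (rightLine ε t).Meets (rightLine ε t')) : t = t' := by
  obtain ⟨c, d, d'⟩ := t
  obtain ⟨b, e, e'⟩ := t'
  have h_rel := h.add_slope_mul_sub
  have hc₀ := (map_ne_zero (algebraMap F K)).2 ht
  have hb₀ := (map_ne_zero (algebraMap F K)).2 ht'
  have hε₀ := ne_zero_of_transcendental hε
  simp only [rightLine] at h_rel hc₀ hb₀
  field_simp at h_rel
  obtain ⟨hc, hd, hd'⟩ := coeff_eq_zero_of_transcendental hε (a := b - c) (b := d - e)
    (c := c * b * (d' - e')) (by
      refine mul_left_cancel₀ (mul_ne_zero hc₀ hb₀) ?_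
      simp only [map_sub, map_mul]
      linear_combination h_rel)
  obtain rfl := sub_eq_zero.1 hc
  obtain rfl := sub_eq_zero.1 hd
  obtain rfl := sub_eq_zero.1 ((mul_eq_zero.1 hd').resolve_left (mul_ne_zero ht ht))
  rfl

lemma leftLine_slope_ne_rightLine_slope (hε : Transcendental F ε) (t : F × F × F)
    {t' : F × F × F} (ht' : t'.1 ≠ 0) : (leftLine ε t).slope ≠ (rightLine ε t').slope := by
  intro h
  simp only [leftLine, rightLine] at h
  rw [eq_div_iff ((map_ne_zero (algebraMap F K)).2 ht')] at h
  refine one_ne_zero (coeff_eq_zero_of_transcendental hε (a := 0) (b := 1) (c := t.1 * t'.1) ?_).2.1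
  simp only [map_zero, map_one, map_mul]
  linear_combination h

lemma leftLine_meets_rightLine (hε : Transcendental F ε) {t t' : F × F × F} (ht' : t'.1 ≠ 0)
    (h : t.1 * (t'.2.1 - t.2.1) = t'.1 * (t'.2.2 - t.2.2)) :
    (leftLine ε t).Meets (rightLine ε t') := by
  refine NullLine.meets_of_add_slope_mul_sub (leftLine_slope_ne_rightLine_slope hε t ht') ?_
  have ht'₀ := (map_ne_zero (algebraMap F K)).2 ht'
  have h_map := congrArg (algebraMap F K) h
  simp only [map_mul, map_sub] at h_map
  simp only [leftLine, rightLine]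
  field_simp
  linear_combination (ε * algebraMap F K t'.1) * h_map

lemma sphere_equations_of_restrict_leftLine {v : Fin 5 → K} {t : F × F × F}
    (h : (leftLine ε t).restrict (sphere v) = 0) :
    v 0 * (algebraMap F K t.1 ^ 2 * algebraMap F K t.2.1 + ε ^ 2 * algebraMap F K t.1 +
        ε * algebraMap F K t.2.2) + v 1 * algebraMap F K t.1 + v 2 * algebraMap F K t.1 ^ 2 +
      v 3 = 0 ∧
    -v 0 * (algebraMap F K t.1 * algebraMap F K t.2.1) ^ 2 -
      v 1 * (algebraMap F K t.1 * algebraMap F K t.2.1) +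
      v 2 * (-algebraMap F K t.1 ^ 2 * algebraMap F K t.2.1 + ε ^ 2 * algebraMap F K t.1 +
        ε * algebraMap F K t.2.2) + v 4 = 0 := by
  obtain ⟨h_slope, h_base⟩ := NullLine.restrict_sphere_eq_zero_iff.1 h
  simp only [leftLine] at h_slope h_base
  exact ⟨by linear_combination h_slope, by linear_combination h_base⟩

variable {S D : Finset F} {T : Finset (F × F × F)} {v : Fin 5 → K}

lemma card_le_two_mul_card_of_apply_zero_ne_zero (hε : Transcendental F ε) (hS : ∀ c ∈ S, c ≠ 0)
    (hT : T ⊆ S ×ˢ D ×ˢ D) (hTv : ∀ t ∈ T, (leftLine ε t).restrict (sphere v) = 0)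
    (hv : v 0 ≠ 0) : T.card ≤ 2 * S.card := by
  obtain ⟨R, hR_card, hR⟩ := exists_finset_roots_quadratic (a := (1 : K)) (b := v 1)
    (c := v 2 * v 3 - v 0 * v 4) (.inl one_ne_zero)
  have hTS {t : F × F × F} (ht : t ∈ T) : t.1 ∈ S := (Finset.mem_product.1 (hT ht)).1
  have h_maps : ∀ t ∈ T,
      (t.1, algebraMap F K t.1 * (v 0 * algebraMap F K t.2.1 + v 2)) ∈ S ×ˢ R := fun t ht => by
    obtain ⟨h₁, h₂⟩ := sphere_equations_of_restrict_leftLine (hTv t ht)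
    exact Finset.mem_product.2 ⟨hTS ht, hR _ (by linear_combination v 2 * h₁ - v 0 * h₂)⟩
  refine (Finset.card_le_card_of_injOn _ h_maps ?_).trans ?_
  · rintro ⟨c, d, d'⟩ ht ⟨b, e, e'⟩ ht' h_eq
    obtain ⟨rfl, h_eq⟩ := Prod.mk.injEq .. ▸ h_eq
    have hc := (map_ne_zero (algebraMap F K)).2 (hS c (hTS ht))
    obtain rfl : d = e := (algebraMap F K).injective
      (mul_left_cancel₀ (mul_ne_zero hc hv) (by linear_combination h_eq))
    obtain rfl : d' = e' := (algebraMap F K).injective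
      (mul_left_cancel₀ (mul_ne_zero hv (ne_zero_of_transcendental hε)) (by
        linear_combination (sphere_equations_of_restrict_leftLine (hTv _ ht)).1 -
          (sphere_equations_of_restrict_leftLine (hTv _ ht')).1))
    rfl
  · rw [Finset.card_product, mul_comm]
    exact Nat.mul_le_mul_right _ hR_card

lemma apply_two_ne_zero_or_apply_one_ne_zero {t : F × F × F} (hv : v ≠ 0) (hv₀ : v 0 = 0)
    (ht : (leftLine ε t).restrict (sphere v) = 0) : v 2 ≠ 0 ∨ v 1 ≠ 0 := by
  by_contra! h
  obtain ⟨h₃, h₄⟩ := h.1 ▸ h.2 ▸ hv₀ ▸ sphere_equations_of_restrict_leftLine ht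
  refine hv (funext fun i => ?_)
  fin_cases i
  exacts [hv₀, h.2, h.1, by simpa using h₃, by simpa using h₄]

lemma card_le_two_mul_card_of_apply_zero_eq_zero (hε : Transcendental F ε) (hS : ∀ c ∈ S, c ≠ 0)
    (hT : T ⊆ S ×ˢ D ×ˢ D) (hTv : ∀ t ∈ T, (leftLine ε t).restrict (sphere v) = 0)
    (hv : v ≠ 0) (hv₀ : v 0 = 0) : T.card ≤ 2 * D.card := by
  classical
  obtain rfl | ⟨t₀, ht₀⟩ := T.eq_empty_or_nonempty
  · exact Nat.zero_le _
  have h_eqs {t : F × F × F} (ht : t ∈ T) := hv₀ ▸ sphere_equations_of_restrict_leftLine (hTv t ht)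
  have hv₂₁ := apply_two_ne_zero_or_apply_one_ne_zero hv hv₀ (hTv t₀ ht₀)
  obtain ⟨R, hR_card, hR⟩ := exists_finset_roots_quadratic (c := v 3) hv₂₁
  have h_maps : ∀ t ∈ T,
      (algebraMap F K t.1, if v 2 = 0 then t.2.2 else t.2.1) ∈ R ×ˢ D := fun t ht => by
    obtain ⟨-, ht_D⟩ := Finset.mem_product.1 (hT ht)
    obtain ⟨hd, hd'⟩ := Finset.mem_product.1 ht_D
    refine Finset.mem_product.2 ⟨hR _ (by linear_combination (h_eqs ht).1), ?_⟩
    split_ifs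
    exacts [hd', hd]
  refine (Finset.card_le_card_of_injOn _ h_maps ?_).trans ?_
  · rintro ⟨c, d, d'⟩ ht ⟨b, e, e'⟩ ht' h_eq
    obtain ⟨h_cb, h_if⟩ := Prod.mk.injEq .. ▸ h_eq
    obtain rfl := (algebraMap F K).injective h_cb
    obtain ⟨-, h_base⟩ := h_eqs ht
    obtain ⟨-, h_base'⟩ := h_eqs ht'
    dsimp only at h_if h_base h_base'
    have hc := (map_ne_zero (algebraMap F K)).2 (hS c (Finset.mem_product.1 (hT ht)).1)
    by_cases hv₂ : v 2 = 0
    · obtain rfl : d' = e' := by simpa only [hv₂, if_true] using h_if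
      obtain rfl : d = e := (algebraMap F K).injective (mul_left_cancel₀
        (mul_ne_zero (hv₂₁.resolve_left (not_not_intro hv₂)) hc)
        (by rw [hv₂] at h_base h_base'; linear_combination h_base' - h_base))
      rfl
    · obtain rfl : d = e := by simpa only [hv₂, if_false] using h_if
      obtain rfl : d' = e' := (algebraMap F K).injective (mul_left_cancel₀
        (mul_ne_zero hv₂ (ne_zero_of_transcendental hε))
        (by linear_combination h_base - h_base'))
      rfl
  · rw [Finset.card_product]
    exact Nat.mul_le_mul_right _ hR_card

open Classical in
lemma card_linesOn_sphere_image_leftLine_le (hε : Transcendental F ε) (hS : ∀ c ∈ S, c ≠ 0)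
    (hv : v ≠ 0) : (linesOn (sphere v) ((S ×ˢ D ×ˢ D).image (leftLine ε))).card ≤
      2 * S.card + 2 * D.card := by
  rw [linesOn, Finset.filter_image]
  refine Finset.card_image_le.trans ?_
  set T := {t ∈ S ×ˢ D ×ˢ D | (leftLine ε t).restrict (sphere v) = 0}
  have hT : T ⊆ S ×ˢ D ×ˢ D := Finset.filter_subset _ _
  have hTv : ∀ t ∈ T, (leftLine ε t).restrict (sphere v) = 0 :=
    fun _ ht => (Finset.mem_filter.1 ht).2
  by_cases hv₀ : v 0 = 0
  · exact (card_le_two_mul_card_of_apply_zero_eq_zero hε hS hT hTv hv hv₀).trans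
      (Nat.le_add_left _ _)
  · exact (card_le_two_mul_card_of_apply_zero_ne_zero hε hS hT hTv hv₀).trans
      (Nat.le_add_right _ _)

open Classical in
lemma genericPair_leftLine_rightLine (hε : Transcendental F ε) (hS : ∀ c ∈ S, c ≠ 0) :
    GenericPair (2 * S.card + 2 * D.card) ((S ×ˢ D ×ˢ D).image (leftLine ε))
      ((S ×ˢ D ×ˢ D).image (rightLine ε)) where
  skew_left := by
    simp only [Set.Pairwise, Finset.mem_coe, Finset.forall_mem_image]
    exact fun t ht t' _ h_ne h => h_ne
      (congrArg _ (leftLine_skew hε (hS _ (Finset.mem_product.1 ht).1) h))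
  skew_right := by
    simp only [Set.Pairwise, Finset.mem_coe, Finset.forall_mem_image]
    exact fun t ht t' ht' h_ne h => h_ne (congrArg _ (rightLine_skew hε
      (hS _ (Finset.mem_product.1 ht).1) (hS _ (Finset.mem_product.1 ht').1) h))
  slope_ne := by
    simp only [Finset.forall_mem_image]
    exact fun t _ t' ht' =>
      leftLine_slope_ne_rightLine_slope hε t (hS _ (Finset.mem_product.1 ht').1)
  card_linesOn_sphere_le _ hv := card_linesOn_sphere_image_leftLine_le hε hS hv

lemma leftLine_injOn (hε : Transcendental F ε) (hT : ∀ t ∈ T, t.1 ≠ 0) :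
    Set.InjOn (leftLine ε) (T : Set (F × F × F)) :=
  fun _ ht _ _ h => leftLine_skew hε (hT _ ht) ⟨0, by rw [h]⟩

lemma rightLine_injOn (hε : Transcendental F ε) (hT : ∀ t ∈ T, t.1 ≠ 0) :
    Set.InjOn (rightLine ε) (T : Set (F × F × F)) :=
  fun _ ht _ ht' h => rightLine_skew hε (hT _ ht) (hT _ ht') ⟨0, by rw [h]⟩

open Classical in
/-- The pairs of triples `(c₁, d₁, d₁')`, `(c₂, d₂, d₂')` in `T` satisfying
`c₁ * (d₂ - d₁) = c₂ * (d₂' - d₁')`; for `T = S ×ˢ D ×ˢ D` they control the energy of `S ×ˢ D`. -/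
noncomputable def proportionalPairs (T : Finset (F × F × F)) :
    Finset ((F × F × F) × (F × F × F)) :=
  {q ∈ T ×ˢ T | q.1.1 * (q.2.2.1 - q.1.2.1) = q.2.1 * (q.2.2.2 - q.1.2.2)}

open Classical in
lemma card_proportionalPairs_le_incidences (hε : Transcendental F ε) (hT : ∀ t ∈ T, t.1 ≠ 0) :
    (proportionalPairs T).card ≤ incidences (T.image (leftLine ε)) (T.image (rightLine ε)) := by
  have h_subset : proportionalPairs T ⊆
      {q ∈ T ×ˢ T | (leftLine ε q.1).Meets (rightLine ε q.2)} := fun q hq => by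
    obtain ⟨hqT, h_eq⟩ := Finset.mem_filter.1 hq
    exact Finset.mem_filter.2
      ⟨hqT, leftLine_meets_rightLine hε (hT _ (Finset.mem_product.1 hqT).2) h_eq⟩
  calc (proportionalPairs T).card
      ≤ {q ∈ T ×ˢ T | (leftLine ε q.1).Meets (rightLine ε q.2)}.card :=
        Finset.card_le_card h_subset
    _ = ∑ t ∈ T, {t' ∈ T | (leftLine ε t).Meets (rightLine ε t')}.card := by
        simp only [Finset.card_filter, Finset.sum_product]
    _ = incidences (T.image (leftLine ε)) (T.image (rightLine ε)) := by
        rw [incidences, Finset.sum_image (leftLine_injOn hε hT)]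
        refine Finset.sum_congr rfl fun t _ => ?_
        rw [NullLine.degree, Finset.filter_image, Finset.card_image_of_injOn]
        exact (rightLine_injOn hε hT).mono (Finset.coe_subset.2 (Finset.filter_subset _ _))

end Lines

/-! ### The energy of a grid -/

section Chunks

lemma sum_le_of_forall_card_le {ι : Type*} {g : ι → ℝ} {M : ℕ} {W : ℝ} (hM : 0 < M) (hW : 0 ≤ W)
    (A : Finset ι) (h : ∀ A' ⊆ A, A'.card ≤ M → ∑ a ∈ A', g a ≤ W) :
    ∑ a ∈ A, g a ≤ (A.card / M + 1) * W := by
  classical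
  induction A using Finset.strongInduction with
  | H A ih =>
  obtain h_le | h_lt := le_or_gt A.card M
  · exact (h A subset_rfl h_le).trans
      (le_mul_of_one_le_left hW (le_add_of_nonneg_left (by positivity)))
  obtain ⟨A', hA', hA'_card⟩ := Finset.exists_subset_card_eq h_lt.le
  have h_ssubset : A \ A' ⊂ A :=
    Finset.sdiff_ssubset hA' (Finset.card_pos.1 (hA'_card.symm ▸ hM))
  have h_card : ((A \ A').card : ℝ) / M = A.card / M - 1 := by
    rw [Finset.card_sdiff_of_subset hA', hA'_card, Nat.cast_sub h_lt.le, sub_div,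
      div_self (by positivity)]
  calc ∑ a ∈ A, g a
      = ∑ a ∈ A \ A', g a + ∑ a ∈ A', g a := (Finset.sum_sdiff hA').symm
    _ ≤ ((A \ A').card / M + 1) * W + W := add_le_add
        (ih _ h_ssubset fun B hB => h B (hB.trans Finset.sdiff_subset))
        (h A' hA' hA'_card.le)
    _ = (A.card / M + 1) * W := by rw [h_card]; ring

variable {K : Type*} [Field K] {A B : Finset (NullLine K)}

lemma incidences_le_of_forall_card_le {M : ℕ} {W : ℝ} (hM : 0 < M) (hW : 0 ≤ W)
    (h : ∀ A' ⊆ A, ∀ B' ⊆ B, A'.card ≤ M → B'.card ≤ M → (incidences A' B' : ℝ) ≤ W) :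
    (incidences A B : ℝ) ≤ (A.card / M + 1) * ((B.card / M + 1) * W) := by
  have h_sum (X Y : Finset (NullLine K)) : (incidences X Y : ℝ) = ∑ a ∈ X, (a.degree Y : ℝ) := by
    rw [incidences, Nat.cast_sum]
  rw [h_sum]
  refine sum_le_of_forall_card_le hM (by positivity) A fun A' hA' hA'_card => ?_
  rw [← h_sum, incidences_comm, h_sum]
  refine sum_le_of_forall_card_le hM hW B fun B' hB' hB'_card => ?_
  rw [← h_sum, incidences_comm]
  exact h A' hA' B' hB' hA'_card hB'_card

namespace GenericPair

variable [Infinite K] {p k N : ℕ} [CharP K p]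

lemma incidences_le_mul_sqrt (h : GenericPair k A B) (hA : A.card = N) (hB : B.card = N)
    (hN : N ≤ p ^ 2 / 2) (hk : (k : ℝ) ≤ 4 * √N) :
    (incidences A B : ℝ) ≤ 40000 * (N * √N) := by
  have h_sqrt : √(2 * N) ≤ 2 * √N := by
    rw [Real.sqrt_mul zero_le_two]
    gcongr
    exact Real.sqrt_le_iff.2 (by norm_num)
  calc (incidences A B : ℝ)
      ≤ 9600 * (2 * N * √(2 * N)) + k * (2 * N) := by
        exact_mod_cast h.incidences_le (p := p) (n := 2 * N) (by lia) (by lia)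
    _ ≤ 9600 * (2 * N * (2 * √N)) + 4 * √N * (2 * N) := by gcongr
    _ ≤ 40000 * (N * √N) := by nlinarith [mul_nonneg N.cast_nonneg (Real.sqrt_nonneg N)]

lemma incidences_le_of_card_le (h : GenericPair k A B) {M : ℕ} (hA : A.card ≤ M)
    (hB : B.card ≤ M) (hM : 2 * M ≤ p ^ 2) (hk : k ≤ 4 * p) :
    (incidences A B : ℝ) ≤ 20000 * (M * p) := by
  set n := A.card + B.card with hn
  have hnM : (n : ℝ) ≤ 2 * M := by exact_mod_cast (by lia : n ≤ 2 * M)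
  have hnp : n ≤ p ^ 2 := by lia
  have h_sqrt : √n ≤ p := Real.sqrt_le_iff.2 ⟨p.cast_nonneg, by exact_mod_cast hnp⟩
  have hk' : (k : ℝ) ≤ 4 * p := by exact_mod_cast hk
  calc (incidences A B : ℝ)
      ≤ 9600 * (n * √n) + k * n := h.incidences_le hn.symm hnp
    _ ≤ 9600 * (2 * M * p) + 4 * p * (2 * M) := by gcongr
    _ ≤ 20000 * (M * p) := by nlinarith [mul_nonneg M.cast_nonneg p.cast_nonneg (α := ℝ)]

lemma incidences_le_sq_div (h : GenericPair k A B) (hA : A.card = N) (hB : B.card = N)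
    (hp : 2 ≤ p) (hN : p ^ 2 / 2 ≤ N) (hk : k ≤ 4 * p) :
    (incidences A B : ℝ) ≤ 320000 * (N ^ 2 / p) := by
  set M := p ^ 2 / 2
  have hp_sq : 2 ^ 2 ≤ p ^ 2 := Nat.pow_le_pow_left hp 2
  have hM : 0 < M := by lia
  have hpM : (p : ℝ) ^ 2 ≤ 4 * M := by exact_mod_cast (by lia : p ^ 2 ≤ 4 * M)
  have h_chunks : (N : ℝ) / M + 1 ≤ 2 * (N / M) := by
    have : 1 ≤ (N : ℝ) / M := (one_le_div (by positivity)).2 (by exact_mod_cast hN)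
    linarith
  have h_inv : (p : ℝ) / M ≤ 4 / p := by
    rw [div_le_div_iff₀ (by positivity) (by positivity), ← sq]
    exact hpM
  calc (incidences A B : ℝ)
      ≤ (N / M + 1) * ((N / M + 1) * (20000 * (M * p))) := by
        simpa only [hA, hB] using incidences_le_of_forall_card_le hM (by positivity)
          fun A' hA' B' hB' hA'M hB'M =>
            (h.mono hA' hB').incidences_le_of_card_le hA'M hB'M (Nat.mul_div_le _ _) hk
    _ ≤ 2 * (N / M) * (2 * (N / M) * (20000 * (M * p))) := by gcongr
    _ = 80000 * N ^ 2 * (p / M) := by field_simp; ring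
    _ ≤ 80000 * N ^ 2 * (4 / p) := by gcongr
    _ = 320000 * (N ^ 2 / p) := by ring

end GenericPair

end Chunks

section Energy

variable {F : Type*} [Field F]

/-- The energy of a finite set `L` of affine maps `x ↦ a * x + b` of a field, encoded as pairs
`(a, b)`: the number of quadruples in `L` with `l₁⁻¹ ∘ l₂ = l₁'⁻¹ ∘ l₂'`. -/
noncomputable def affineEnergy (L : Finset (F × F)) : ℕ :=
  Set.ncard {q : (F × F) × (F × F) × (F × F) × (F × F) |
    q.1 ∈ L ∧ q.2.1 ∈ L ∧ q.2.2.1 ∈ L ∧ q.2.2.2 ∈ L ∧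
    (q.1.1⁻¹ * q.2.1.1, q.1.1⁻¹ * q.2.1.2 + -(q.1.1⁻¹ * q.1.2)) =
      (q.2.2.1.1⁻¹ * q.2.2.2.1, q.2.2.1.1⁻¹ * q.2.2.2.2 + -(q.2.2.1.1⁻¹ * q.2.2.1.2))}

lemma affEnergy_eq_affineEnergy (p : ℕ) [Fact p.Prime] (L : Finset (ZMod p × ZMod p)) :
    affEnergy p L = affineEnergy L :=
  rfl

variable {S D : Finset F}

/-- Given the slopes `c₁, c₁', c₂'`, the slope `c₂` is determined, and the remaining equation says
`c₁' * (d₂ - d₁) = c₁ * (d₂' - d₁')`. -/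
lemma affineEnergy_le_card_mul_card_proportionalPairs (hS : ∀ c ∈ S, c ≠ 0) :
    affineEnergy (S ×ˢ D) ≤ S.card * (proportionalPairs (S ×ˢ D ×ˢ D)).card := by
  rw [← Finset.card_product, ← Set.ncard_coe_finset, affineEnergy]
  refine Set.ncard_le_ncard_of_injOn
    (fun q => (q.2.2.2.1, ((q.2.2.1.1, q.1.2, q.2.2.1.2), (q.1.1, q.2.1.2, q.2.2.2.2)))) ?_ ?_
    (Finset.finite_toSet _)
  · rintro ⟨⟨c₁, d₁⟩, ⟨c₂, d₂⟩, ⟨c₁', d₁'⟩, ⟨c₂', d₂'⟩⟩ ⟨h₁, h₂, h₁', h₂', h_eq⟩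
    simp only [Finset.mem_product, Prod.mk.injEq] at h₁ h₂ h₁' h₂' h_eq
    have hc₁ := hS _ h₁.1
    have hc₁' := hS _ h₁'.1
    obtain ⟨-, h_shift⟩ := h_eq
    field_simp at h_shift
    simp only [proportionalPairs, Finset.coe_product, Set.mem_prod, Finset.mem_coe,
      Finset.mem_filter, Finset.mem_product]
    exact ⟨h₂'.1, ⟨⟨h₁'.1, h₁.2, h₁'.2⟩, h₁.1, h₂.2, h₂'.2⟩, by linear_combination h_shift⟩
  · rintro ⟨⟨c₁, d₁⟩, ⟨c₂, d₂⟩, ⟨c₁', d₁'⟩, ⟨c₂', d₂'⟩⟩ ⟨h₁, -, -, -, h_eq⟩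
      ⟨⟨b₁, e₁⟩, ⟨b₂, e₂⟩, ⟨b₁', e₁'⟩, ⟨b₂', e₂'⟩⟩ ⟨-, -, -, -, h_eq'⟩ h_image
    simp only [Finset.mem_product, Prod.mk.injEq] at h₁ h_eq h_eq' h_image
    obtain ⟨rfl, ⟨rfl, rfl, rfl⟩, rfl, rfl, rfl⟩ := h_image
    obtain rfl : c₂ = b₂ :=
      mul_left_cancel₀ (inv_ne_zero (hS _ h₁.1)) (h_eq.1.trans h_eq'.1.symm)
    rfl

lemma two_mul_add_two_mul_le_four_mul_sqrt {s d : ℕ} (hs : 0 < s) (hsd : s ≤ d ^ 2) :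
    2 * (s : ℝ) + 2 * d ≤ 4 * √(s * d ^ 2 : ℕ) := by
  have hs_sqrt : (s : ℝ) ≤ √(s * d ^ 2 : ℕ) := Real.le_sqrt_of_sq_le (by
    exact_mod_cast (sq s).trans_le (Nat.mul_le_mul_left _ hsd))
  have hd_sqrt : (d : ℝ) ≤ √(s * d ^ 2 : ℕ) := Real.le_sqrt_of_sq_le (by
    exact_mod_cast Nat.le_mul_of_pos_left _ hs)
  linarith

lemma card_proportionalPairs_le {p N : ℕ} [CharP F p] (hp : 2 ≤ p) (hS : ∀ c ∈ S, c ≠ 0)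
    (hN : S.card * D.card ^ 2 = N) (h_sqrt : 2 * (S.card : ℝ) + 2 * D.card ≤ 4 * √N)
    (hSp : S.card ≤ p) (hDp : D.card ≤ p) :
    ((proportionalPairs (S ×ˢ D ×ˢ D)).card : ℝ) ≤ 320000 * ((N : ℝ) ^ 2 / p + N * √N) := by
  classical
  have hε : Transcendental F (RatFunc.X : RatFunc F) := RatFunc.transcendental_X
  have : CharP (RatFunc F) p := charP_of_injective_algebraMap (algebraMap F (RatFunc F)).injective p
  have : Infinite (RatFunc F) := .of_injective _ (RatFunc.algebraMap_injective F)
  have hT : ∀ t ∈ S ×ˢ D ×ˢ D, t.1 ≠ 0 := fun t ht => hS _ (Finset.mem_product.1 ht).1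
  have hT_card : (S ×ˢ D ×ˢ D).card = N := by
    rw [Finset.card_product, Finset.card_product, ← sq, hN]
  have hA := (Finset.card_image_of_injOn (leftLine_injOn hε hT)).trans hT_card
  have hB := (Finset.card_image_of_injOn (rightLine_injOn hε hT)).trans hT_card
  have h_pair := genericPair_leftLine_rightLine hε hS (D := D)
  refine (Nat.cast_le.2 (card_proportionalPairs_le_incidences hε hT)).trans ?_
  have h_sq_nonneg : (0 : ℝ) ≤ (N : ℝ) ^ 2 / p := by positivity
  have h_sqrt_nonneg : (0 : ℝ) ≤ N * √N := by positivity
  obtain h_le | h_ge := le_total N (p ^ 2 / 2)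
  · have := h_pair.incidences_le_mul_sqrt hA hB h_le (by exact_mod_cast h_sqrt)
    linarith
  · have := h_pair.incidences_le_sq_div hA hB hp h_ge (by lia)
    linarith

end Energy

end GridEnergy

open GridEnergy in
theorem grid_energy_Fp_general :
    ∃ C₁ : ℝ, 0 < C₁ ∧
      ∀ {F : Type*} [Field F] (p : ℕ) [CharP F p],
        ∀ S D : Finset F, S.Nonempty → S.card ≤ p → D.card ≤ p →
          (∀ c ∈ S, c ≠ 0) → S.card ≤ D.card ^ 2 →
          (affineEnergy (S ×ˢ D) : ℝ) ≤
            C₁ * ((S.card : ℝ) ^ 3 * (D.card : ℝ) ^ 4 / (p : ℝ) +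
              (S.card : ℝ) ^ ((5 : ℝ) / 2) * (D.card : ℝ) ^ 3) := by
  refine ⟨320000, by norm_num, fun {F} _ p _ S D hS_ne hSp hDp hS hSD => ?_⟩
  have hS_pos : 0 < S.card := hS_ne.card_pos
  have hp : 2 ≤ p :=
    ((CharP.char_is_prime_or_zero F p).resolve_right (hS_pos.trans_le hSp).ne').two_le
  set N := S.card * D.card ^ 2 with hN
  have h_sqrt : √(N : ℝ) = √S.card * D.card := by
    rw [hN, Nat.cast_mul, Nat.cast_pow, Real.sqrt_mul (Nat.cast_nonneg _),
      Real.sqrt_sq (Nat.cast_nonneg _)]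
  have h_rpow : (S.card : ℝ) ^ ((5 : ℝ) / 2) = S.card ^ 2 * √S.card := by
    rw [Real.sqrt_eq_rpow, ← Real.rpow_natCast, ← Real.rpow_add (by positivity)]
    norm_num
  calc (affineEnergy (S ×ˢ D) : ℝ)
      ≤ S.card * (proportionalPairs (S ×ˢ D ×ˢ D)).card := by
        exact_mod_cast affineEnergy_le_card_mul_card_proportionalPairs hS
    _ ≤ S.card * (320000 * ((N : ℝ) ^ 2 / p + N * √N)) := by
        gcongr
        exact card_proportionalPairs_le hp hS hN.symm
          (two_mul_add_two_mul_le_four_mul_sqrt hS_pos hSD) hSp hDp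
    _ = _ := by
        rw [h_sqrt, h_rpow, hN]
        push_cast
        ring

/-- **Lemma 3.8** (energy of a grid of affine transformations over F_p): there is an
absolute constant `C₁` such that for every prime `p`, all finite nonempty `C ⊆ F_p\{0}`
and `D ⊆ F_p` with `|C| ≤ |D|²`, the grid `L = C×D ⊆ Aff(F_p)` satisfies
`E(L) ≤ C₁·(|C|³|D|⁴/p + |C|^{5/2}|D|³)`. -/
theorem grid_energy_Fp :
    ∃ C₁ : ℝ, 0 < C₁ ∧
      ∀ (p : ℕ) [Fact p.Prime],
        ∀ S D : Finset (ZMod p), S.Nonempty → D.Nonempty →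
          (∀ c ∈ S, c ≠ 0) → S.card ≤ D.card ^ 2 →
          (affEnergy p (S ×ˢ D) : ℝ) ≤
            C₁ * ((S.card : ℝ) ^ 3 * (D.card : ℝ) ^ 4 / (p : ℝ) +
              (S.card : ℝ) ^ ((5 : ℝ) / 2) * (D.card : ℝ) ^ 3) := by
  obtain ⟨C₁, hC₁, h⟩ := grid_energy_Fp_general
  have h_card {p : ℕ} [Fact p.Prime] (T : Finset (ZMod p)) : T.card ≤ p :=
    T.card_le_univ.trans_eq (ZMod.card p)
  refine ⟨C₁, hC₁, fun p _ S D hS_ne _ hS hSD => ?_⟩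
  rw [GridEnergy.affEnergy_eq_affineEnergy]
  exact h p S D hS_ne (h_card S) (h_card D) hS hSD
end

section
/- There exists an absolute constant C₀ such that for all finite sets A, B, C, D ⊆ R with 0 ∉ C and |C| ≤ |D|², the number of incidences between the point set A×B and the set of lines {y = cx + d : c ∈ C, d ∈ D} satisfies I(A×B, C×D) ≤ C₀·( |A|^(2/3)·|B|^(1/2)·|C|^(3/4)·|D|^(5/6) + |B|^(1/2)·|C|·|D| ). -/
/-!
Read the lines `y = c x + d`, `c ≠ 0`, as elements of the affine group acting on the ordered line.
By Cauchy–Schwarz over `B`, the square of the number of incidences is at most `|B|` times the number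
of points of `A × A` on the lines `h⁻¹ g`, where `g` and `h` range over the given lines `L`. These
compositions repeat; the number of their coincidences is the energy of `L`.

A Szemerédi–Trotter bound for grids controls such weighted incidence counts: cut both sides of a
grid into `r` intervals; the graph of a monotone map visits at most `2 r` of the `r ^ 2` cells, so a
graph with at least `4 r` points has many pairs of points inside common cells, while two points
determine the line.

The same bound controls the energy. Since `g₂⁻¹ g₁ = h₂⁻¹ h₁` is equivalent to
`g₁ h₁⁻¹ = g₂ h₂⁻¹`, one may count coincidences of `g h⁻¹` instead, and these lines map intercepts
to intercepts: `g h⁻¹` sends `h(0) ∈ D` to `g(0) ∈ D`. This bounds the energy by a weighted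
incidence count on `D × D`, hence by a sublinear expression in the energy itself.
-/

open Finset

section RealEstimates

theorem le_mul_of_le_add_of_cube_le {E M u : ℝ} (hM : 0 ≤ M) (hu : u ^ 3 ≤ M ^ 2 * E)
    (hE : E ≤ 8 * u + 4 * M) : E ≤ 64 * M := by
  by_contra! hlt
  have u_lt : u < E / 16 := by
    refine lt_of_pow_lt_pow_left₀ 3 (by linarith) ?_
    have : (64 * M) ^ 2 < E ^ 2 := by gcongr
    nlinarith
  linarith

theorem pow_six_rpow_mul_rpow_mul_rpow {a k d : ℝ} (ha : 0 ≤ a) (hk : 0 ≤ k) (hd : 0 ≤ d) :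
    (a ^ (2 / 3 : ℝ) * k ^ (3 / 4 : ℝ) * d ^ (5 / 6 : ℝ)) ^ 6 = a ^ 4 * √k ^ 9 * d ^ 5 := by
  simp only [Real.sqrt_eq_rpow, mul_pow, ← Real.rpow_mul_natCast ha, ← Real.rpow_mul_natCast hk,
    ← Real.rpow_mul_natCast hd, ← Real.rpow_natCast]
  norm_num

end RealEstimates

section Collisions

variable {α β : Type*} [DecidableEq β]

/-- The number of pairs of elements of `s` with the same image under `f`, i.e. the second moment of
the fibre sizes of `f` on `s`. For `f (g, h) = h⁻¹ * g` on `L ×ˢ L` this is the energy of `L`. -/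
def collisionCount (s : Finset α) (f : α → β) : ℕ :=
  #{p ∈ s ×ˢ s | f p.1 = f p.2}

theorem collisionCount_mono {s t : Finset α} (f : α → β) (h : s ⊆ t) :
    collisionCount s f ≤ collisionCount t f :=
  card_le_card (filter_subset_filter _ (product_subset_product h h))

theorem collisionCount_eq_sum_card (s : Finset α) (f : α → β) :
    collisionCount s f = ∑ x ∈ s, #{y ∈ s | f y = f x} := by
  simp only [collisionCount, card_filter, sum_product, eq_comm]

theorem collisionCount_eq_sum_sq (s : Finset α) (f : α → β) :
    collisionCount s f = ∑ b ∈ s.image f, #{x ∈ s | f x = b} ^ 2 := by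
  simp only [collisionCount_eq_sum_card, sum_comp (fun b ↦ #{x ∈ s | f x = b}) f, smul_eq_mul, sq]

theorem collisionCount_eq_card_add_offDiag (s : Finset α) (f : α → β) :
    collisionCount s f = #s + #{p ∈ s.offDiag | f p.1 = f p.2} := by
  classical
  have diag_collides : {p ∈ s.diag | f p.1 = f p.2} = s.diag :=
    filter_true_of_mem fun p hp ↦ congrArg f (mem_diag.1 hp).2
  rw [collisionCount, ← diag_union_offDiag, filter_union,
    card_union_of_disjoint (disjoint_filter_filter (disjoint_diag_offDiag s)), diag_collides,
    diag_card]

theorem sq_sum_comp_le_collisionCount_mul (s : Finset α) (f : α → β) (w : β → ℕ) :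
    (∑ x ∈ s, w (f x)) ^ 2 ≤ collisionCount s f * ∑ b ∈ s.image f, w b ^ 2 := by
  simp only [sum_comp w f, smul_eq_mul, collisionCount_eq_sum_sq]
  exact sum_mul_sq_le_sq_mul_sq _ _ _

theorem sq_card_le_card_image_mul_collisionCount (s : Finset α) (f : α → β) :
    #s ^ 2 ≤ #(s.image f) * collisionCount s f := by
  simpa [mul_comm] using sq_sum_comp_le_collisionCount_mul s f 1

theorem sum_le_mul_card_add_sum_filter_le (s : Finset α) (w : α → ℕ) (t : ℕ) :
    ∑ x ∈ s, w x ≤ t * #s + ∑ x ∈ s with t ≤ w x, w x := by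
  rw [sum_filter, mul_comm, ← smul_eq_mul, ← sum_const, ← sum_add_distrib]
  gcongr with x
  split_ifs <;> lia

end Collisions

section Cells

variable {X : Type*} [LinearOrder X]

/-- The number of elements of `A` below `x`; on `A` itself, the position in increasing order,
starting from `0`. -/
def rankIn (A : Finset X) (x : X) : ℕ := #{a ∈ A | a < x}

theorem rankIn_mono (A : Finset X) : Monotone (rankIn A) := fun _ _ hxy ↦
  card_le_card (monotone_filter_right A fun _ _ ha ↦ ha.trans_le hxy)

theorem rankIn_lt_rankIn {A : Finset X} {x y : X} (hx : x ∈ A) (hxy : x < y) :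
    rankIn A x < rankIn A y :=
  card_lt_card <| ssubset_iff_of_subset (monotone_filter_right A fun _ _ ha ↦ ha.trans hxy) |>.2
    ⟨x, by simp [hx, hxy], by simp⟩

theorem rankIn_injOn (A : Finset X) : Set.InjOn (rankIn A) A :=
  StrictMonoOn.injOn fun _ hx _ _ hxy ↦ rankIn_lt_rankIn hx hxy

theorem rankIn_lt_card {A : Finset X} {x : X} (hx : x ∈ A) : rankIn A x < #A :=
  card_lt_card <| filter_ssubset.2 ⟨x, hx, lt_irrefl x⟩

theorem card_rankIn_div_eq_le (A : Finset X) {m : ℕ} (hm : 0 < m) (i : ℕ) :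
    #{x ∈ A | rankIn A x / m = i} ≤ m := by
  calc #{x ∈ A | rankIn A x / m = i}
      ≤ #(Ico (i * m) (i * m + m)) := by
        refine card_le_card_of_injOn (rankIn A) (fun x hx ↦ ?_)
          ((rankIn_injOn A).mono (coe_subset.2 (filter_subset _ _)))
        obtain ⟨-, rfl⟩ := mem_filter.1 hx
        exact mem_Ico.2 ⟨Nat.div_mul_le_self _ _, Nat.lt_div_mul_add hm⟩
    _ = m := by simp

theorem exists_monotone_mul_collisionCount_le {A : Finset X} {r : ℕ} (hr : 0 < r) (hrA : r ≤ #A) :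
    ∃ f : X → ℕ, Monotone f ∧ (∀ x ∈ A, f x < r) ∧ r * collisionCount A f ≤ 2 * #A ^ 2 := by
  set m := #A / r + 1
  have card_lt : #A < r * m := Nat.lt_mul_div_succ _ hr
  have mul_le : r * m ≤ 2 * #A := by
    have := Nat.mul_div_le #A r
    grind
  refine ⟨fun x ↦ rankIn A x / m, fun x y hxy ↦ Nat.div_le_div_right (rankIn_mono A hxy),
    fun x hx ↦ Nat.div_lt_of_lt_mul ?_, ?_⟩
  · rw [mul_comm]
    exact (rankIn_lt_card hx).trans card_lt
  · calc r * collisionCount A (fun x ↦ rankIn A x / m)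
        ≤ r * ∑ _x ∈ A, m := by
          rw [collisionCount_eq_sum_card]
          gcongr
          exact card_rankIn_div_eq_le A m.pos_of_neZero _
      _ = #A * (r * m) := by rw [sum_const, smul_eq_mul]; ring
      _ ≤ #A * (2 * #A) := by gcongr
      _ = 2 * #A ^ 2 := by ring

theorem card_image_prodMk_le_of_monotone_of_monotone {u v : X → ℕ} (hu : Monotone u)
    (hv : Monotone v) {T : Finset X} {r : ℕ} (hur : ∀ x ∈ T, u x < r) (hvr : ∀ x ∈ T, v x < r) :
    #(T.image fun x ↦ (u x, v x)) ≤ 2 * r := by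
  rw [← card_range (2 * r)]
  refine card_le_card_of_injOn (fun p ↦ p.1 + p.2) ?_ ?_
  · simp only [coe_image, Set.mapsTo_image_iff]
    intro x hx
    have := hur x hx
    have := hvr x hx
    simp only [Function.comp_apply, coe_range, Set.mem_Iio]
    lia
  · simp only [coe_image]
    rintro _ ⟨x, -, rfl⟩ _ ⟨y, -, rfl⟩ h
    rcases le_total x y with hxy | hxy <;>
    · have := hu hxy
      have := hv hxy
      simp only [Prod.mk.injEq] at h ⊢
      lia

theorem card_image_prodMk_le_of_monotone_of_antitone {u v : X → ℕ} (hu : Monotone u)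
    (hv : Antitone v) {T : Finset X} {r : ℕ} (hur : ∀ x ∈ T, u x < r) (hvr : ∀ x ∈ T, v x < r) :
    #(T.image fun x ↦ (u x, v x)) ≤ 2 * r := by
  let reflect : ℕ × ℕ → ℕ × ℕ := Prod.map id (r - 1 - ·)
  have reflect_injOn : Set.InjOn reflect (T.image fun x ↦ (u x, v x)) := by
    simp only [coe_image]
    rintro _ ⟨x, hx, rfl⟩ _ ⟨y, hy, rfl⟩ h
    have := hvr x hx
    have := hvr y hy
    simp only [reflect, Prod.map_apply, id_eq, Prod.mk.injEq] at h ⊢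
    lia
  have reflected_le := card_image_prodMk_le_of_monotone_of_monotone (v := fun x ↦ r - 1 - v x)
    hu (fun x y hxy ↦ Nat.sub_le_sub_left (hv hxy) _) hur (fun x hx ↦ by have := hvr x hx; lia)
  rw [← card_image_of_injOn reflect_injOn, image_image]
  exact reflected_le

end Cells

section Richness

variable {G X : Type*} [SMul G X] [DecidableEq X]

/-- The number of points of the grid `A × B` on the graph of `g`. -/
def richness (A B : Finset X) (g : G) : ℕ :=
  #{x ∈ A | g • x ∈ B}

theorem richness_le_card_left (A B : Finset X) (g : G) : richness A B g ≤ #A :=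
  card_filter_le _ _

theorem sum_richness_eq_card (A B : Finset X) (L : Finset G) :
    ∑ g ∈ L, richness A B g = #{z ∈ L ×ˢ A | z.1 • z.2 ∈ B} := by
  simp only [richness, card_filter, sum_product]

/-- The pairs of distinct points of `A × B` on the graph of `g` that lie in a common cell, where
`u` and `v` index the cells of `A` and `B`. Points are recorded by their first coordinates. -/
def cellPairs (A B : Finset X) (u v : X → ℕ) (g : G) : Finset (X × X) :=
  {p ∈ offDiag {x ∈ A | g • x ∈ B} | (u p.1, v (g • p.1)) = (u p.2, v (g • p.2))}

theorem mem_cellPairs {A B : Finset X} {u v : X → ℕ} {g : G} {p : X × X} :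
    p ∈ cellPairs A B u v g ↔ (p.1 ∈ A ∧ g • p.1 ∈ B) ∧ (p.2 ∈ A ∧ g • p.2 ∈ B) ∧ p.1 ≠ p.2 ∧
      u p.1 = u p.2 ∧ v (g • p.1) = v (g • p.2) := by
  simp only [cellPairs, mem_filter, mem_offDiag, Prod.mk.injEq, and_assoc]

end Richness

section GroupAction

variable {G X : Type*} [Group G] [MulAction G X] [DecidableEq X]

theorem richness_le_card_right (A B : Finset X) (g : G) : richness A B g ≤ #B :=
  card_le_card_of_injOn (g • ·) (fun _ hx ↦ (mem_filter.1 hx).2) (MulAction.injective g).injOn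

theorem card_product_self_le_of_card_orbitMap_fiber_le {L : Finset G} {D : Finset X} {o : X} {k : ℕ}
    (hD : ∀ g ∈ L, g • o ∈ D) (hk : ∀ d ∈ D, #{g ∈ L | g • o = d} ≤ k) :
    #(L ×ˢ L) ≤ (k * #D) ^ 2 := by
  rw [card_product, ← sq]
  gcongr
  exact card_le_mul_card_image_of_maps_to hD k hk

theorem sq_sum_richness_le (A B : Finset X) (L : Finset G) :
    (∑ g ∈ L, richness A B g) ^ 2 ≤
      #B * ∑ p ∈ L ×ˢ L, richness A A (p.2⁻¹ * p.1) := by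
  set T : Finset (G × X) := {z ∈ L ×ˢ A | z.1 • z.2 ∈ B}
  have image_subset : T.image (fun z ↦ z.1 • z.2) ⊆ B :=
    image_subset_iff.2 fun z hz ↦ (mem_filter.1 hz).2
  have collisions_le :
      collisionCount T (fun z ↦ z.1 • z.2) ≤ ∑ p ∈ L ×ˢ L, richness A A (p.2⁻¹ * p.1) := by
    simp only [richness]
    rw [← card_sigma, collisionCount]
    refine card_le_card_of_injOn (fun z ↦ ⟨(z.1.1, z.2.1), z.1.2⟩) ?_ ?_
    · rintro ⟨⟨g, x⟩, h, y⟩ hz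
      simp only [T, coe_filter, mem_product, Set.mem_ofPred_eq, mem_filter] at hz
      have hy : (h⁻¹ * g) • x = y := by rw [mul_smul, hz.2, inv_smul_smul]
      simp only [coe_sigma, Set.mem_sigma_iff, mem_coe, mem_product, mem_filter, hy]
      tauto
    · rintro ⟨⟨g, x⟩, h, y⟩ hz ⟨⟨g', x'⟩, h', y'⟩ hz' heq
      have hgx : g • x = h • y := (mem_filter.1 hz).2
      have hgx' : g' • x' = h' • y' := (mem_filter.1 hz').2
      simp only [Sigma.mk.injEq, Prod.mk.injEq, heq_eq_eq] at heq
      obtain ⟨⟨rfl, rfl⟩, rfl⟩ := heq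
      obtain rfl := MulAction.injective h (hgx.symm.trans hgx')
      rfl
  calc (∑ g ∈ L, richness A B g) ^ 2
      = #T ^ 2 := by rw [sum_richness_eq_card]
    _ ≤ #(T.image fun z ↦ z.1 • z.2) * collisionCount T (fun z ↦ z.1 • z.2) :=
      sq_card_le_card_image_mul_collisionCount _ _
    _ ≤ #B * ∑ p ∈ L ×ˢ L, richness A A (p.2⁻¹ * p.1) := by gcongr

variable [DecidableEq G]

theorem collisionCount_inv_mul_eq_collisionCount_mul_inv (L : Finset G) :
    collisionCount (L ×ˢ L) (fun p ↦ p.2⁻¹ * p.1) =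
      collisionCount (L ×ˢ L) (fun p ↦ p.1 * p.2⁻¹) := by
  refine card_equiv (Equiv.prodProdProdComm G G G G) ?_
  rintro ⟨⟨g₁, g₂⟩, h₁, h₂⟩
  have swap_iff : g₂⁻¹ * g₁ = h₂⁻¹ * h₁ ↔ g₁ * h₁⁻¹ = g₂ * h₂⁻¹ := by
    rw [inv_mul_eq_iff_eq_mul, mul_inv_eq_iff_eq_mul, mul_assoc]
  simp only [mem_filter, mem_product, Equiv.prodProdProdComm_apply, swap_iff]
  tauto

theorem collisionCount_mul_inv_le {L : Finset G} {D : Finset X} {o : X} {k : ℕ}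
    (hD : ∀ g ∈ L, g • o ∈ D) (hk : ∀ d ∈ D, #{g ∈ L | g • o = d} ≤ k) :
    collisionCount (L ×ˢ L) (fun p ↦ p.1 * p.2⁻¹) ≤
      k * ∑ p ∈ L ×ˢ L, richness D D (p.1 * p.2⁻¹) := by
  rw [collisionCount_eq_sum_card, mul_sum]
  gcongr with p
  generalize p.1 * p.2⁻¹ = γ
  have fst_eq : ∀ q ∈ {q ∈ L ×ˢ L | q.1 * q.2⁻¹ = γ}, q.1 = γ * q.2 := fun q hq ↦
    mul_inv_eq_iff_eq_mul.1 (mem_filter.1 hq).2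
  refine card_le_mul_card_image_of_maps_to (f := fun q ↦ q.2 • o) (fun q hq ↦ ?_) k
    fun d hd ↦ (card_le_card_of_injOn Prod.snd (fun q hq ↦ ?_) fun q hq q' hq' heq ↦ ?_).trans
      (hk d (mem_filter.1 hd).1)
  · have hqL := mem_product.1 (mem_filter.1 hq).1
    rw [mem_filter, ← mul_smul, ← fst_eq q hq]
    exact ⟨hD _ hqL.2, hD _ hqL.1⟩
  · obtain ⟨hq, hqd⟩ := mem_filter.1 hq
    exact mem_filter.2 ⟨(mem_product.1 (mem_filter.1 hq).1).2, hqd⟩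
  · have hq := fst_eq q (mem_filter.1 hq).1
    have hq' := fst_eq q' (mem_filter.1 hq').1
    exact Prod.ext (by rw [hq, hq', heq]) heq

end GroupAction

section MonotoneAction

/-- Every `g : G` acts on `X` by a monotone or antitone map and is determined by the images of any
two distinct points. The motivating example is the affine group of an ordered field: non-vertical,
non-horizontal lines are graphs of such maps, and two points determine a line. -/
class IsMonotoneTwoPointAction (G X : Type*) [SMul G X] [Preorder X] : Prop where
  monotone_or_antitone (g : G) : Monotone (fun x : X ↦ g • x) ∨ Antitone (fun x : X ↦ g • x)
  eq_of_smul_eq_smul {g h : G} {x y : X} (hxy : x ≠ y) (hx : g • x = h • x) (hy : g • y = h • y) :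
    g = h

variable {G X : Type*} [LinearOrder X]

section SMul

variable [SMul G X] [IsMonotoneTwoPointAction G X] {A B : Finset X} {u v : X → ℕ}

theorem card_image_cell_le (hu : Monotone u) (hv : Monotone v) {r : ℕ} (hur : ∀ x ∈ A, u x < r)
    (hvr : ∀ y ∈ B, v y < r) (g : G) :
    #({x ∈ A | g • x ∈ B}.image fun x ↦ (u x, v (g • x))) ≤ 2 * r := by
  have hur' : ∀ x ∈ {x ∈ A | g • x ∈ B}, u x < r := fun x hx ↦ hur x (mem_filter.1 hx).1
  have hvr' : ∀ x ∈ {x ∈ A | g • x ∈ B}, v (g • x) < r := fun x hx ↦ hvr _ (mem_filter.1 hx).2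
  rcases IsMonotoneTwoPointAction.monotone_or_antitone (X := X) g with hg | hg
  · exact card_image_prodMk_le_of_monotone_of_monotone hu (hv.comp hg) hur' hvr'
  · exact card_image_prodMk_le_of_monotone_of_antitone hu (hv.comp_antitone hg) hur' hvr'

theorem richness_sq_le_mul_card_cellPairs (hu : Monotone u) (hv : Monotone v) {r : ℕ}
    (hur : ∀ x ∈ A, u x < r) (hvr : ∀ y ∈ B, v y < r) {g : G} (hg : 4 * r ≤ richness A B g) :
    richness A B g ^ 2 ≤ 4 * r * #(cellPairs A B u v g) := by
  have second_moment : richness A B g ^ 2 ≤ 2 * r * (richness A B g + #(cellPairs A B u v g)) :=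
    calc richness A B g ^ 2
        ≤ _ * collisionCount {x ∈ A | g • x ∈ B} (fun x ↦ (u x, v (g • x))) :=
          sq_card_le_card_image_mul_collisionCount _ _
      _ ≤ 2 * r * collisionCount {x ∈ A | g • x ∈ B} (fun x ↦ (u x, v (g • x))) := by
          gcongr
          exact card_image_cell_le hu hv hur hvr g
      _ = 2 * r * (richness A B g + #(cellPairs A B u v g)) := by
          rw [collisionCount_eq_card_add_offDiag, richness, cellPairs]
  nlinarith

theorem sum_card_cellPairs_le (A B : Finset X) (u v : X → ℕ) (L : Finset G) :
    ∑ g ∈ L, #(cellPairs A B u v g) ≤ collisionCount A u * collisionCount B v := by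
  rw [← card_sigma, collisionCount, collisionCount, ← card_product]
  refine card_le_card_of_injOn
    (fun z ↦ (z.2, (z.1 • z.2.1, z.1 • z.2.2))) ?_ ?_
  · rintro ⟨g, p⟩ hz
    have hp := mem_cellPairs.1 (mem_sigma.1 hz).2
    simp only [coe_product, Set.mem_prod, mem_coe, mem_filter, mem_product]
    tauto
  · rintro ⟨g, p⟩ hz ⟨h, q⟩ - heq
    have hp := mem_cellPairs.1 (mem_sigma.1 hz).2
    simp only [Prod.mk.injEq] at heq
    obtain ⟨rfl, hfst, hsnd⟩ := heq
    obtain rfl := IsMonotoneTwoPointAction.eq_of_smul_eq_smul hp.2.2.1 hfst hsnd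
    rfl

end SMul

variable [Group G] [MulAction G X] [IsMonotoneTwoPointAction G X]

theorem mul_sum_richness_sq_le (A B : Finset X) {L : Finset G} {r : ℕ} (hr : 0 < r)
    (hrich : ∀ g ∈ L, 4 * r ≤ richness A B g) :
    r * ∑ g ∈ L, richness A B g ^ 2 ≤ 16 * (#A ^ 2 * #B ^ 2) := by
  rcases L.eq_empty_or_nonempty with rfl | ⟨g₀, hg₀⟩
  · simp
  have hrA : r ≤ #A := by have := hrich g₀ hg₀; have := richness_le_card_left A B g₀; lia
  have hrB : r ≤ #B := by have := hrich g₀ hg₀; have := richness_le_card_right A B g₀; lia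
  obtain ⟨u, hu, hur, hAu⟩ := exists_monotone_mul_collisionCount_le hr hrA
  obtain ⟨v, hv, hvr, hBv⟩ := exists_monotone_mul_collisionCount_le hr hrB
  calc r * ∑ g ∈ L, richness A B g ^ 2
      ≤ r * ∑ g ∈ L, 4 * r * #(cellPairs A B u v g) := by
        gcongr with g hg
        exact richness_sq_le_mul_card_cellPairs hu hv hur hvr (hrich g hg)
    _ = 4 * r ^ 2 * ∑ g ∈ L, #(cellPairs A B u v g) := by rw [← mul_sum]; ring
    _ ≤ 4 * r ^ 2 * (collisionCount A u * collisionCount B v) := by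
        gcongr
        exact sum_card_cellPairs_le A B u v L
    _ = 4 * ((r * collisionCount A u) * (r * collisionCount B v)) := by ring
    _ ≤ 4 * ((2 * #A ^ 2) * (2 * #B ^ 2)) := by gcongr
    _ = 16 * (#A ^ 2 * #B ^ 2) := by ring

theorem mul_sq_sum_rich_le [DecidableEq G] {ι : Type*} (A B : Finset X) (P : Finset ι)
    (φ : ι → G) {r : ℕ} (hr : 0 < r) :
    r * (∑ p ∈ P with 4 * r ≤ richness A B (φ p), richness A B (φ p)) ^ 2 ≤
      16 * (#A ^ 2 * #B ^ 2) * collisionCount P φ := by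
  set R := {p ∈ P | 4 * r ≤ richness A B (φ p)}
  have rich_image : ∀ g ∈ R.image φ, 4 * r ≤ richness A B g :=
    forall_mem_image.2 fun p hp ↦ (mem_filter.1 hp).2
  calc r * (∑ p ∈ R, richness A B (φ p)) ^ 2
      ≤ r * (collisionCount R φ * ∑ g ∈ R.image φ, richness A B g ^ 2) := by
        gcongr
        exact sq_sum_comp_le_collisionCount_mul R φ (richness A B)
    _ = (r * ∑ g ∈ R.image φ, richness A B g ^ 2) * collisionCount R φ := by ring
    _ ≤ 16 * (#A ^ 2 * #B ^ 2) * collisionCount P φ :=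
        Nat.mul_le_mul (mul_sum_richness_sq_le A B hr rich_image)
          (collisionCount_mono φ (filter_subset _ _))

theorem sum_richness_le_of_le_cube [DecidableEq G] {ι : Type*} (A B : Finset X) (P : Finset ι)
    (φ : ι → G) {q : ℝ}
    (hq : (#A : ℝ) ^ 2 * (#B : ℝ) ^ 2 * collisionCount P φ * #P ≤ q ^ 3) :
    (∑ p ∈ P, richness A B (φ p) : ℝ) ≤ 8 * q + 4 * #P := by
  have q_nonneg : 0 ≤ q := (Odd.pow_nonneg_iff ⟨1, rfl⟩).1 (le_trans (by positivity) hq)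
  rcases P.eq_empty_or_nonempty with rfl | hP
  · simpa using q_nonneg
  have card_pos : (0 : ℝ) < #P := by exact_mod_cast hP.card_pos
  -- This threshold balances the poor and the rich transformations.
  set r := ⌊q / #P⌋₊ + 1
  have q_le : q ≤ r * #P := by
    rw [← div_le_iff₀ card_pos]
    exact_mod_cast (Nat.lt_floor_add_one (q / #P)).le
  have le_q_add : (r : ℝ) * #P ≤ q + #P := by
    have : (⌊q / #P⌋₊ : ℝ) * #P ≤ q :=
      (le_div_iff₀ card_pos).1 (Nat.floor_le (by positivity))
    push_cast [r]
    linarith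
  set richSum := ∑ p ∈ P with 4 * r ≤ richness A B (φ p), richness A B (φ p)
  have split : (∑ p ∈ P, richness A B (φ p) : ℝ) ≤ 4 * r * #P + richSum := by
    exact_mod_cast sum_le_mul_card_add_sum_filter_le P (fun p ↦ richness A B (φ p)) (4 * r)
  have rich :
      (r : ℝ) * (richSum : ℝ) ^ 2 ≤ 16 * ((#A : ℝ) ^ 2 * (#B : ℝ) ^ 2) * collisionCount P φ := by
    exact_mod_cast mul_sq_sum_rich_le A B P φ (Nat.succ_pos _)
  have rich_sum_le : (richSum : ℝ) ≤ 4 * q := by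
    refine le_of_sq_le_sq (le_of_mul_le_mul_left ?_ (by positivity : (0 : ℝ) < r * #P))
      (by positivity)
    calc r * #P * (richSum : ℝ) ^ 2
        = r * (richSum : ℝ) ^ 2 * #P := by ring
      _ ≤ 16 * ((#A : ℝ) ^ 2 * (#B : ℝ) ^ 2) * collisionCount P φ * #P := by gcongr
      _ ≤ 16 * q ^ 2 * q := by linear_combination 16 * hq
      _ ≤ 16 * q ^ 2 * (r * #P) := by gcongr
      _ = r * #P * (4 * q) ^ 2 := by ring
  linarith

variable {L : Finset G} {D : Finset X} {o : X} {k : ℕ}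

theorem collisionCount_mul_inv_le_sqrt_pow [DecidableEq G] (hD : ∀ g ∈ L, g • o ∈ D)
    (hk : ∀ d ∈ D, #{g ∈ L | g • o = d} ≤ k) (hkD : k ≤ #D ^ 2) :
    (collisionCount (L ×ˢ L) (fun p ↦ p.1 * p.2⁻¹) : ℝ) ≤ 64 * (√k ^ 5 * (#D : ℝ) ^ 3) := by
  set E := collisionCount (L ×ˢ L) (fun p ↦ p.1 * p.2⁻¹)
  set s := √(k : ℝ)
  have sq_s : s ^ 2 = k := Real.sq_sqrt k.cast_nonneg
  have s_le : s ≤ #D := Real.sqrt_le_iff.2 ⟨by positivity, by exact_mod_cast hkD⟩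
  have card_pairs_le : (#(L ×ˢ L) : ℝ) ≤ (k * #D) ^ 2 := by
    exact_mod_cast card_product_self_le_of_card_orbitMap_fiber_le hD hk
  obtain ⟨q, hq⟩ : ∃ q : ℝ, q ^ 3 = (#D : ℝ) ^ 2 * (#D : ℝ) ^ 2 * E * (k * #D) ^ 2 :=
    ⟨_, Real.rpow_inv_natCast_pow (by positivity) three_ne_zero⟩
  have sum_le := sum_richness_le_of_le_cube D D (L ×ˢ L) (fun p ↦ p.1 * p.2⁻¹) (q := q)
    (by rw [hq]; gcongr)
  refine le_mul_of_le_add_of_cube_le (u := k * q) (by positivity) (le_of_eq ?_) ?_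
  · rw [mul_pow, hq, ← sq_s]
    ring
  · calc (E : ℝ)
        ≤ k * ∑ p ∈ L ×ˢ L, (richness D D (p.1 * p.2⁻¹) : ℝ) := by
          exact_mod_cast collisionCount_mul_inv_le hD hk
      _ ≤ k * (8 * q + 4 * (k * #D) ^ 2) := by gcongr; linarith
      _ = 8 * (k * q) + 4 * (s ^ 5 * (#D : ℝ) ^ 2 * s) := by rw [← sq_s]; ring
      _ ≤ 8 * (k * q) + 4 * (s ^ 5 * (#D : ℝ) ^ 2 * #D) := by gcongr
      _ = 8 * (k * q) + 4 * (s ^ 5 * (#D : ℝ) ^ 3) := by ring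

theorem sum_richness_inv_mul_le (A : Finset X) (hD : ∀ g ∈ L, g • o ∈ D)
    (hk : ∀ d ∈ D, #{g ∈ L | g • o = d} ≤ k) (hkD : k ≤ #D ^ 2) :
    (∑ p ∈ L ×ˢ L, richness A A (p.2⁻¹ * p.1) : ℝ) ≤
      32 * ((#A : ℝ) ^ (2 / 3 : ℝ) * (k : ℝ) ^ (3 / 4 : ℝ) * (#D : ℝ) ^ (5 / 6 : ℝ)) ^ 2 +
        4 * (k * #D) ^ 2 := by
  classical
  set x := (#A : ℝ) ^ (2 / 3 : ℝ) * (k : ℝ) ^ (3 / 4 : ℝ) * (#D : ℝ) ^ (5 / 6 : ℝ)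
  set s := √(k : ℝ) with hs
  have sq_s : s ^ 2 = k := Real.sq_sqrt k.cast_nonneg
  have x_pow : x ^ 6 = (#A : ℝ) ^ 4 * s ^ 9 * (#D : ℝ) ^ 5 :=
    pow_six_rpow_mul_rpow_mul_rpow (by positivity) (by positivity) (by positivity)
  have card_pairs_le : (#(L ×ˢ L) : ℝ) ≤ (k * #D) ^ 2 := by
    exact_mod_cast card_product_self_le_of_card_orbitMap_fiber_le hD hk
  have energy_le := collisionCount_mul_inv_le_sqrt_pow hD hk hkD
  rw [← collisionCount_inv_mul_eq_collisionCount_mul_inv, ← hs] at energy_le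
  have sum_le := sum_richness_le_of_le_cube A A (L ×ˢ L) (fun p ↦ p.2⁻¹ * p.1) (q := 4 * x ^ 2) <|
    calc (#A : ℝ) ^ 2 * (#A : ℝ) ^ 2 * collisionCount (L ×ˢ L) (fun p ↦ p.2⁻¹ * p.1) * #(L ×ˢ L)
        ≤ (#A : ℝ) ^ 2 * (#A : ℝ) ^ 2 * (64 * (s ^ 5 * (#D : ℝ) ^ 3)) * (k * #D) ^ 2 := by gcongr
      _ = 64 * ((#A : ℝ) ^ 4 * s ^ 9 * (#D : ℝ) ^ 5) := by rw [← sq_s]; ring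
      _ = (4 * x ^ 2) ^ 3 := by rw [← x_pow]; ring
  linarith

theorem sum_richness_le_of_card_orbitMap_fiber_le (A B : Finset X) (hD : ∀ g ∈ L, g • o ∈ D)
    (hk : ∀ d ∈ D, #{g ∈ L | g • o = d} ≤ k) (hkD : k ≤ #D ^ 2) :
    (∑ g ∈ L, richness A B g : ℝ) ≤
      6 * ((#A : ℝ) ^ (2 / 3 : ℝ) * (#B : ℝ) ^ (1 / 2 : ℝ) * (k : ℝ) ^ (3 / 4 : ℝ) *
        (#D : ℝ) ^ (5 / 6 : ℝ) + (#B : ℝ) ^ (1 / 2 : ℝ) * k * #D) := by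
  have pairs_le := sum_richness_inv_mul_le A hD hk hkD
  set x := (#A : ℝ) ^ (2 / 3 : ℝ) * (k : ℝ) ^ (3 / 4 : ℝ) * (#D : ℝ) ^ (5 / 6 : ℝ)
  set y := (k : ℝ) * #D
  set b := (#B : ℝ) ^ (1 / 2 : ℝ)
  have b_sq : b ^ 2 = #B := by
    simp only [b, ← Real.sqrt_eq_rpow]
    exact Real.sq_sqrt (by positivity)
  have sq_sum_le : (∑ g ∈ L, richness A B g : ℝ) ^ 2 ≤ (6 * (b * (x + y))) ^ 2 :=
    calc (∑ g ∈ L, richness A B g : ℝ) ^ 2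
        ≤ #B * ∑ p ∈ L ×ˢ L, (richness A A (p.2⁻¹ * p.1) : ℝ) := by
          exact_mod_cast sq_sum_richness_le A B L
      _ ≤ #B * (36 * (x + y) ^ 2) := by
          gcongr
          have : 0 ≤ x * y := by positivity
          nlinarith
      _ = (6 * (b * (x + y))) ^ 2 := by rw [← b_sq]; ring
  calc (∑ g ∈ L, richness A B g : ℝ)
      ≤ 6 * (b * (x + y)) := le_of_sq_le_sq sq_sum_le (by positivity)
    _ = _ := by ring

end MonotoneAction

section AffineLine

/-- The tautological action; its elements are the lines `y = c x + d` with `c ≠ 0` when the affine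
space is a field over itself. -/
instance affineEquivApplyMulAction {k V P : Type*} [Ring k] [AddCommGroup V] [Module k V]
    [AddTorsor V P] : MulAction (P ≃ᵃ[k] P) P where
  smul g x := g x
  one_smul _ := rfl
  mul_smul _ _ _ := rfl

variable {K : Type*} [Field K]

theorem affineEquiv_smul_eq_slope_mul_add (g : K ≃ᵃ[K] K) (x : K) :
    g • x = (g • (1 : K) - g • (0 : K)) * x + g • (0 : K) := by
  have g_lineMap : g • AffineMap.lineMap (0 : K) 1 x = AffineMap.lineMap (g • 0 : K) (g • 1) x :=
    g.apply_lineMap 0 1 x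
  simpa [AffineMap.lineMap_apply_ring', mul_comm] using g_lineMap

theorem exists_affineEquiv_smul_eq {c : K} (hc : c ≠ 0) (d : K) :
    ∃ g : K ≃ᵃ[K] K, ∀ x : K, g • x = c * x + d :=
  ⟨(LinearEquiv.smulOfNeZero K K c hc).toAffineEquiv.trans (AffineEquiv.constVAdd K K d),
    fun _ ↦ add_comm _ _⟩

theorem affineEquiv_eq_of_smul_eq_smul {g h : K ≃ᵃ[K] K} {x y : K} (hxy : x ≠ y)
    (hx : g • x = h • x) (hy : g • y = h • y) : g = h := by
  rw [affineEquiv_smul_eq_slope_mul_add g, affineEquiv_smul_eq_slope_mul_add h] at hx hy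
  have slope_eq : g • (1 : K) - g • (0 : K) = h • (1 : K) - h • (0 : K) :=
    mul_right_cancel₀ (sub_ne_zero.2 hxy) (by linear_combination hx - hy)
  have intercept_eq : g • (0 : K) = h • (0 : K) := by
    linear_combination hx - x * slope_eq
  refine AffineEquiv.ext fun z ↦ ?_
  change g • z = h • z
  rw [affineEquiv_smul_eq_slope_mul_add g, affineEquiv_smul_eq_slope_mul_add h, slope_eq,
    intercept_eq]

theorem slope_intercept_injective :
    Function.Injective fun g : K ≃ᵃ[K] K ↦ (g • (1 : K) - g • (0 : K), g • (0 : K)) := by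
  intro g h heq
  obtain ⟨slope_eq, intercept_eq⟩ := Prod.mk.inj heq
  exact affineEquiv_eq_of_smul_eq_smul one_ne_zero
    (by linear_combination slope_eq + intercept_eq) intercept_eq

/-- The lines `y = c x + d` with `c ∈ S` and `d ∈ D`, encoded through their slope `g 1 - g 0` and
intercept `g 0`. A slope `0` in `S` contributes nothing. -/
noncomputable def gridLines (S D : Finset K) : Finset (K ≃ᵃ[K] K) :=
  (S ×ˢ D).preimage (fun g ↦ (g • (1 : K) - g • (0 : K), g • (0 : K)))
    slope_intercept_injective.injOn

theorem mem_gridLines {S D : Finset K} {g : K ≃ᵃ[K] K} :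
    g ∈ gridLines S D ↔ g • (1 : K) - g • (0 : K) ∈ S ∧ g • (0 : K) ∈ D := by
  simp only [gridLines, mem_preimage, mem_product]

theorem card_gridLines_fiber_le [DecidableEq K] (S D : Finset K) (d : K) :
    #{g ∈ gridLines S D | g • (0 : K) = d} ≤ #S := by
  refine card_le_card_of_injOn (fun g ↦ g • (1 : K) - g • (0 : K))
    (fun g hg ↦ (mem_gridLines.1 (mem_filter.1 hg).1).1) fun g hg h hh slope_eq ↦ ?_
  have intercept_eq := (mem_filter.1 hg).2.trans (mem_filter.1 hh).2.symm
  exact slope_intercept_injective (Prod.ext slope_eq intercept_eq)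

theorem ncard_incidences_le_sum_richness [DecidableEq K] (A B : Finset K) {S : Finset K}
    (D : Finset K) (hS : 0 ∉ S) :
    Set.ncard {x : K × K × K × K | x.1 ∈ A ∧ x.2.1 ∈ B ∧ x.2.2.1 ∈ S ∧ x.2.2.2 ∈ D ∧
      x.2.1 = x.2.2.1 * x.1 + x.2.2.2} ≤ ∑ g ∈ gridLines S D, richness A B g := by
  set T : Finset ((K ≃ᵃ[K] K) × K) := {z ∈ gridLines S D ×ˢ A | z.1 • z.2 ∈ B}
  let incidence (z : (K ≃ᵃ[K] K) × K) : K × K × K × K :=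
    (z.2, z.1 • z.2, z.1 • (1 : K) - z.1 • (0 : K), z.1 • (0 : K))
  rw [sum_richness_eq_card]
  refine le_trans ?_ (card_image_le (s := T) (f := incidence))
  rw [← Set.ncard_coe_finset]
  refine Set.ncard_le_ncard ?_ (finite_toSet _)
  rintro ⟨a, b, c, d⟩ ⟨ha, hb, hc, hd, hbeq⟩
  dsimp only at ha hb hc hd hbeq
  subst hbeq
  obtain ⟨g, hg⟩ := exists_affineEquiv_smul_eq (ne_of_mem_of_not_mem hc hS) d
  refine mem_image.2 ⟨(g, a), mem_filter.2 ⟨mem_product.2 ⟨mem_gridLines.2 ?_, ha⟩, ?_⟩, ?_⟩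
  · simpa [hg] using ⟨hc, hd⟩
  · rwa [hg]
  · simp [incidence, hg]

instance affineEquiv_isMonotoneTwoPointAction [LinearOrder K] [IsStrictOrderedRing K] :
    IsMonotoneTwoPointAction (K ≃ᵃ[K] K) K where
  monotone_or_antitone g := by
    rw [funext (affineEquiv_smul_eq_slope_mul_add g)]
    rcases le_total 0 (g • (1 : K) - g • (0 : K)) with hslope | hslope
    · exact .inl ((monotone_mul_left_of_nonneg hslope).add_const _)
    · exact .inr ((antitone_mul_left hslope).add_const _)
  eq_of_smul_eq_smul := affineEquiv_eq_of_smul_eq_smul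

end AffineLine

theorem grid_grid_incidences_general {K : Type*} [Field K] [LinearOrder K] [IsStrictOrderedRing K]
    (A B S D : Finset K) (hS : 0 ∉ S) (hSD : #S ≤ #D ^ 2) :
    (Set.ncard {x : K × K × K × K |
        x.1 ∈ A ∧ x.2.1 ∈ B ∧ x.2.2.1 ∈ S ∧ x.2.2.2 ∈ D ∧
        x.2.1 = x.2.2.1 * x.1 + x.2.2.2} : ℝ)
      ≤ 6 * ((#A : ℝ) ^ (2 / 3 : ℝ) * (#B : ℝ) ^ (1 / 2 : ℝ) * (#S : ℝ) ^ (3 / 4 : ℝ) *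
          (#D : ℝ) ^ (5 / 6 : ℝ) + (#B : ℝ) ^ (1 / 2 : ℝ) * #S * #D) :=
  calc _
    _ ≤ (∑ g ∈ gridLines S D, richness A B g : ℝ) := by
      exact_mod_cast ncard_incidences_le_sum_richness A B D hS
    _ ≤ _ := sum_richness_le_of_card_orbitMap_fiber_le (o := 0) A B
      (fun _ hg ↦ (mem_gridLines.1 hg).2) (fun d _ ↦ card_gridLines_fiber_le S D d) hSD

/-- **Corollary 3.9 over ℝ** (incidences between two grids): there is an absolute
constant `C₀` such that for all finite `A, B, C, D ⊆ ℝ` with `0 ∉ C` and `|C| ≤ |D|²`,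
the number of incidences between the point set `A×B` and the set of lines
`{y = cx + d : c ∈ C, d ∈ D}` satisfies
`I(A×B, C×D) ≤ C₀·(|A|^{2/3}|B|^{1/2}|C|^{3/4}|D|^{5/6} + |B|^{1/2}|C||D|)`. -/
theorem grid_grid_incidences :
    ∃ C₀ : ℝ, 0 < C₀ ∧
      ∀ A B S D : Finset ℝ, (0 : ℝ) ∉ S → S.card ≤ D.card ^ 2 →
        (Set.ncard {x : ℝ × ℝ × ℝ × ℝ |
            x.1 ∈ A ∧ x.2.1 ∈ B ∧ x.2.2.1 ∈ S ∧ x.2.2.2 ∈ D ∧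
            x.2.1 = x.2.2.1 * x.1 + x.2.2.2} : ℝ)
          ≤ C₀ * ((A.card : ℝ) ^ ((2 : ℝ) / 3) * (B.card : ℝ) ^ ((1 : ℝ) / 2) *
                (S.card : ℝ) ^ ((3 : ℝ) / 4) * (D.card : ℝ) ^ ((5 : ℝ) / 6) +
              (B.card : ℝ) ^ ((1 : ℝ) / 2) * (S.card : ℝ) * (D.card : ℝ)) :=
  ⟨6, by norm_num, grid_grid_incidences_general⟩
end
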